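/- Let p̄ be a sequence with 0 < p(i) < 1 for all i such that log(∏_{i=1}^n (1 − p(i))) / log n → 0 as n → ∞ (so that for every first-order sentence ψ of the language L, lim_{n→∞} Prob(n,p̄;ψ) exists and equals 0 or 1). Then there is no computable function D from L-sentences to {0,1} such that for every sentence ψ of L, D(ψ) = 1 if and only if lim_{n→∞} Prob(n,p̄;ψ) = 1. -/

import Mathlib

open FirstOrder Filter

namespace RandomGraph

/-- The set of potential edges of a graph on `Fin n` (pairs `(v,w)` with `v < w`).
Vertex `v : Fin n` represents the number `v + 1` of the interval `[n] = {1, …, n}`. -/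
abbrev EdgeIdx (n : ℕ) := {e : Fin n × Fin n // e.1 < e.2}

/-- An outcome of the random graph on `[n]`: a choice of which potential edges are present. -/
abbrev Sample (n : ℕ) := EdgeIdx n → Bool

/-- Adjacency of two vertices (described by their values in `Fin n`) in the outcome `ω`. -/
def adjVal {n : ℕ} (ω : Sample n) (a b : ℕ) : Prop :=
  ∃ e : EdgeIdx n, ω e = true ∧
    ((e.1.1.val = a ∧ e.1.2.val = b) ∨ (e.1.1.val = b ∧ e.1.2.val = a))

/-- Adjacency of two vertices in the outcome `ω`. -/
def sampleAdj {n : ℕ} (ω : Sample n) (v w : Fin n) : Prop := adjVal ω v.val w.val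

/-- The probability of the outcome `ω` in the model `G(n, p̄)`: each pair of distinct
vertices at distance `d` is an edge with probability `p d`, independently.  (The value `p 0` is
never used, since distinct vertices are at distance at least 1.) -/
noncomputable def sampleWeight (p : ℕ → ℝ) {n : ℕ} (ω : Sample n) : ℝ :=
  ∏ e : EdgeIdx n,
    (if ω e then p (e.1.2.val - e.1.1.val) else 1 - p (e.1.2.val - e.1.1.val))

/-- The probability of the outcome `ω` in the circular model `C(n, p̄)`: vertices `v, w` are
adjacent with probability `p (min |v-w| (n - |v-w|))`, independently. -/
noncomputable def cWeight (p : ℕ → ℝ) {n : ℕ} (ω : Sample n) : ℝ :=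
  ∏ e : EdgeIdx n,
    (if ω e then p (min (e.1.2.val - e.1.1.val) (n - (e.1.2.val - e.1.1.val)))
      else 1 - p (min (e.1.2.val - e.1.1.val) (n - (e.1.2.val - e.1.1.val))))

open scoped Classical in
/-- The probability of the event `P` in the random graph `G(n, p̄)`. -/
noncomputable def Pr (p : ℕ → ℝ) (n : ℕ) (P : Sample n → Prop) : ℝ :=
  ∑ ω : Sample n, if P ω then sampleWeight p ω else 0

open scoped Classical in
/-- The probability of the event `P` in the circular random graph `C(n, p̄)`. -/
noncomputable def cPr (p : ℕ → ℝ) (n : ℕ) (P : Sample n → Prop) : ℝ :=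
  ∑ ω : Sample n, if P ω then cWeight p ω else 0

/-! ### The language `L` of graphs (also used as the language `L^c`) -/

/-- An outcome `ω` of the random graph, viewed as a structure of `FirstOrder.Language.graph`,
the language with a single binary adjacency predicate. -/
def graphStructure {n : ℕ} (ω : Sample n) : Language.graph.Structure (Fin n) where
  RelMap | .adj => fun x => sampleAdj ω (x 0) (x 1)

/-- Satisfaction of a sentence of the language `L` in the outcome `ω`. -/
def SatL {n : ℕ} (ω : Sample n) (ψ : Language.graph.Sentence) : Prop :=
  @Language.Sentence.Realize _ _ (graphStructure ω) ψ

/-- `Prob(n, p̄; ψ)` for a sentence `ψ` of the language `L`. -/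
noncomputable def ProbL (p : ℕ → ℝ) (n : ℕ) (ψ : Language.graph.Sentence) : ℝ :=
  Pr p n fun ω => SatL ω ψ

/-- The probability that `C(n, p̄)` satisfies a sentence `ψ` of the language `L^c = L`. -/
noncomputable def cProbL (p : ℕ → ℝ) (n : ℕ) (ψ : Language.graph.Sentence) : ℝ :=
  cPr p n fun ω => SatL ω ψ

/-! ### The language `L₊` -/

/-- The constants of the language `L₊`: the first element `1` and the last element `n`. -/
inductive plusFunc : ℕ → Type
  | one : plusFunc 0
  | last : plusFunc 0

/-- The relations of `L₊`: adjacency and successor. -/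
inductive plusRel : ℕ → Type
  | adj : plusRel 2
  | succ : plusRel 2

/-- The language `L₊` with adjacency, successor (`x = y + 1`), and constants `1` and `n`. -/
def Lplus : Language := ⟨plusFunc, plusRel⟩

/-- An outcome `ω` of the random graph on `[m+1]`, as an `L₊`-structure. -/
def plusStructure {m : ℕ} (ω : Sample (m + 1)) : Lplus.Structure (Fin (m + 1)) where
  funMap | .one => fun _ => 0 | .last => fun _ => Fin.last m
  RelMap
    | .adj => fun x => sampleAdj ω (x 0) (x 1)
    | .succ => fun x => (x 0).val = (x 1).val + 1

/-- `Prob(n, p̄; ψ)` for a sentence `ψ` of `L₊` (set to `0` in the irrelevant case `n = 0`,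
where the constants cannot be interpreted). -/
noncomputable def ProbPlus (p : ℕ → ℝ) : ℕ → Lplus.Sentence → ℝ
  | 0, _ => 0
  | (m + 1), ψ => Pr p (m + 1) fun ω => @Language.Sentence.Realize _ _ (plusStructure ω) ψ

/-! ### The language `L≤` -/

/-- The relations of `L≤`: adjacency and linear order. -/
inductive leRel : ℕ → Type
  | adj : leRel 2
  | le : leRel 2

/-- The language `L≤` with adjacency and a linear order. -/
def Lle : Language := ⟨fun _ => Empty, leRel⟩

/-- An outcome `ω` of the random graph on `[n]`, as an `L≤`-structure. -/
def leStructure {n : ℕ} (ω : Sample n) : Lle.Structure (Fin n) where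
  funMap := fun f _ => Empty.elim f
  RelMap
    | .adj => fun x => sampleAdj ω (x 0) (x 1)
    | .le => fun x => x 0 ≤ x 1

/-- Satisfaction of a sentence of `L≤` in the outcome `ω`. -/
def SatLe {n : ℕ} (ω : Sample n) (ψ : Lle.Sentence) : Prop :=
  @Language.Sentence.Realize _ _ (leStructure ω) ψ

/-- `Prob(n, p̄; ψ)` for a sentence `ψ` of `L≤`. -/
noncomputable def ProbLe (p : ℕ → ℝ) (n : ℕ) (ψ : Lle.Sentence) : ℝ :=
  Pr p n fun ω => SatLe ω ψ

/-! ### The circular languages `L₊^c` and `L≤^c` -/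

/-- The relations of `L₊^c`: adjacency and cyclic successor. -/
inductive plusCRel : ℕ → Type
  | adj : plusCRel 2
  | succ : plusCRel 2

/-- The language `L₊^c`, with adjacency and cyclic successor (`x = y + 1 (mod n)`). -/
def LplusC : Language := ⟨fun _ => Empty, plusCRel⟩

/-- An outcome `ω` of the circular random graph on `[n]`, as an `L₊^c`-structure. -/
def plusCStructure {n : ℕ} (ω : Sample n) : LplusC.Structure (Fin n) where
  funMap := fun f _ => Empty.elim f
  RelMap
    | .adj => fun x => sampleAdj ω (x 0) (x 1)
    | .succ => fun x => (x 0).val = ((x 1).val + 1) % n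

/-- The probability that `C(n, p̄)` satisfies a sentence `ψ` of the language `L₊^c`. -/
noncomputable def cProbPlus (p : ℕ → ℝ) (n : ℕ) (ψ : LplusC.Sentence) : ℝ :=
  cPr p n fun ω => @Language.Sentence.Realize _ _ (plusCStructure ω) ψ

/-- The relations of `L≤^c`: adjacency and the ternary clockwise-order predicate. -/
inductive cycRel : ℕ → Type
  | adj : cycRel 2
  | btw : cycRel 3

/-- The language `L≤^c`, with adjacency and the ternary clockwise-order predicate `C`. -/
def Lcyc : Language := ⟨fun _ => Empty, cycRel⟩

/-- `C(a, b, c)`: `a ≤ b ≤ c` holds after some cyclic permutation of `(a, b, c)`. -/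
def cyclicBtw {n : ℕ} (a b c : Fin n) : Prop :=
  (a ≤ b ∧ b ≤ c) ∨ (b ≤ c ∧ c ≤ a) ∨ (c ≤ a ∧ a ≤ b)

/-- An outcome `ω` of the circular random graph on `[n]`, as an `L≤^c`-structure. -/
def cycStructure {n : ℕ} (ω : Sample n) : Lcyc.Structure (Fin n) where
  funMap := fun f _ => Empty.elim f
  RelMap
    | .adj => fun x => sampleAdj ω (x 0) (x 1)
    | .btw => fun x => cyclicBtw (x 0) (x 1) (x 2)

/-- Satisfaction of a sentence of `L≤^c` in the outcome `ω`. -/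
def SatCyc {n : ℕ} (ω : Sample n) (ψ : Lcyc.Sentence) : Prop :=
  @Language.Sentence.Realize _ _ (cycStructure ω) ψ

/-- The probability that `C(n, p̄)` satisfies a sentence `ψ` of the language `L≤^c`. -/
noncomputable def cProbCyc (p : ℕ → ℝ) (n : ℕ) (ψ : Lcyc.Sentence) : ℝ :=
  cPr p n fun ω => SatCyc ω ψ


instance (n : ℕ) : Encodable (Language.graph.Relations n) where
  encode _ := 0
  decode _ := match n with
    | 2 => some .adj
    | 0 => none
    | 1 => none
    | (_ + 3) => none
  encodek r := by cases r; rfl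

instance : IsEmpty (Σ i : ℕ, Language.graph.Functions i) :=
  ⟨fun x => (x.2 : Empty).elim⟩

/-- The standard encoding of a sentence of the language of graphs as a natural number: the
sentence is written as a list of symbols (`FirstOrder.Language.BoundedFormula.listEncode`),
which is then encoded by `Encodable.encode`. -/
def sentenceCode (ψ : Language.graph.Sentence) : ℕ :=
  Encodable.encode ψ.listEncode

section Core
open Nat.Partrec (Code)

variable {V : Type} (D : V → Prop) (R : ℕ → V → V → Prop)

def IsZ (x : V) : Prop := ∀ w, D w → ¬ R 0 w x

def PP (n a b : V) : Prop := R 2 n a ∧ R 3 n b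

def StepP (a' b' a b : V) : Prop :=
  (R 0 a' b' ∧ R 1 a' a ∧ R 0 a b' ∧ b = b') ∨ (R 1 a' b' ∧ a = b' ∧ IsZ D R b) ∨
  (R 0 b' a' ∧ a = a' ∧ R 1 b' b) ∨ (a' = b' ∧ IsZ D R a ∧ R 1 a' b)

def TT (c : Code) (x y : V) : Prop := R (4 + c.encodeCode) x y

def Just : Code → V → V → Prop
  | .zero, _, y => IsZ D R y
  | .succ, x, y => R 1 x y
  | .left, x, y => ∃ b, D b ∧ PP R x y b
  | .right, x, y => ∃ a, D a ∧ PP R x a y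
  | .pair f g, x, y => ∃ a, D a ∧ ∃ b, D b ∧ TT R f x a ∧ TT R g x b ∧ PP R y a b
  | .comp f g, x, y => ∃ a, D a ∧ TT R g x a ∧ TT R f a y
  | .prec f g, x, y => ∃ a, D a ∧ ∃ m, D m ∧ PP R x a m ∧
      ((IsZ D R m ∧ TT R f a y) ∨
        ∃ m', D m' ∧ ∃ x', D x' ∧ ∃ w, D w ∧ ∃ q, D q ∧ ∃ q', D q' ∧
          R 1 m' m ∧ PP R x' a m' ∧ TT R (.prec f g) x' w ∧ PP R q m' w ∧ PP R q' a q ∧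
          TT R g q' y)
  | .rfind' f, x, y => ∃ a, D a ∧ ∃ m, D m ∧ PP R x a m ∧
      ∃ w, D w ∧ TT R f x w ∧
      ((IsZ D R w ∧ y = m) ∨
        (¬ IsZ D R w ∧ ∃ m', D m' ∧ ∃ x', D x' ∧ R 1 m m' ∧ PP R x' a m' ∧
          TT R (.rfind' f) x' y))

def AxO : Prop :=
  (∀ x, D x → ¬ R 0 x x) ∧
  (∀ x, D x → ∀ y, D y → ∀ w, D w → R 0 x y → R 0 y w → R 0 x w) ∧
  (∀ x, D x → ∀ y, D y → R 0 x y ∨ x = y ∨ R 0 y x) ∧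
  (∀ x, D x → ∀ y, D y → R 1 x y → R 0 x y ∧ ∀ w, D w → ¬ (R 0 x w ∧ R 0 w y))

def AxP : Prop :=
  ∀ n, D n → ∀ a, D a → ∀ b, D b → PP R n a b →
    (IsZ D R n ∧ IsZ D R a ∧ IsZ D R b) ∨
    ∃ n', D n' ∧ ∃ a', D a' ∧ ∃ b', D b' ∧ R 1 n' n ∧ PP R n' a' b' ∧ StepP D R a' b' a b

def AxJ (c : Code) : Prop :=
  ∀ x, D x → ∀ y, D y → TT R c x y → Just D R c x y

theorem exists_val [Finite V] (h : AxO D R) :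
    ∃ val : V → ℕ, (∀ x y, D x → D y → (R 0 x y ↔ val x < val y)) ∧
      (∀ x y, D x → D y → val x = val y → x = y) ∧
      (∀ x, D x → ∀ m < val x, ∃ y, D y ∧ val y = m) ∧
      ∃ N, ∀ x, D x → val x < N := by
  classical
  obtain ⟨hi, ht, hto, -⟩ := h
  let r : {v // D v} → {v // D v} → Prop := fun a b => R 0 a b
  have : IsStrictTotalOrder {v // D v} r :=
    { trichotomous := fun a b h1 h2 => by
        rcases hto a a.2 b b.2 with h | h | h
        · exact absurd h h1
        · exact Subtype.ext h
        · exact absurd h h2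
      irrefl := fun a => hi a a.2
      trans := fun a b c => ht a a.2 b b.2 c c.2 }
  let : LinearOrder {v // D v} := linearOrderOfSTO r
  have := Fintype.ofFinite {v // D v}
  let e := Fintype.orderIsoFinOfCardEq {v // D v} rfl
  refine ⟨fun x => if h : D x then (e.symm ⟨x, h⟩).val else 0, ?_, ?_, ?_, Fintype.card {v // D v}, ?_⟩
  · intro x y hx hy
    simp only [hx, hy, dif_pos]
    rw [Fin.val_fin_lt, e.symm.lt_iff_lt]
    rfl
  · intro x y hx hy hh
    simp only [hx, hy, dif_pos] at hh
    have := e.symm.injective (Fin.ext hh)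
    exact congrArg Subtype.val this
  · intro x hx m hm
    simp only [hx, dif_pos] at hm
    refine ⟨e ⟨m, hm.trans (Fin.isLt _)⟩, (e _).2, ?_⟩
    simp [(e _).2]
  · intro x hx
    simp only [hx, dif_pos]
    exact Fin.isLt _

theorem pair_step {a' b' a b : ℕ}
    (h : (a' < b' ∧ a = a' + 1 ∧ a < b' ∧ b = b') ∨ (b' = a' + 1 ∧ a = b' ∧ b = 0) ∨
      (b' < a' ∧ a = a' ∧ b = b' + 1) ∨ (a' = b' ∧ a = 0 ∧ b = a' + 1)) :
    Nat.pair a b = Nat.pair a' b' + 1 := by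
  unfold Nat.pair
  rcases h with ⟨h1, h2, h3, h4⟩ | ⟨h1, h2, h3⟩ | ⟨h1, h2, h3⟩ | ⟨h1, h2, h3⟩
  · subst h2 h4; rw [if_pos h3, if_pos h1]; ring
  · subst h2 h1 h3; rw [if_neg (by omega), if_pos (by omega)]; ring
  · subst h2 h3; rw [if_neg (by omega), if_neg (by omega)]; ring
  · subst h1 h2 h3; rw [if_pos (by omega), if_neg (by omega)]; ring

theorem mem_eval_rfind (f : Code) (a m y : ℕ) :
    y ∈ (Code.rfind' f).eval (Nat.pair a m) ↔ ∃ n, y = n + m ∧ 0 ∈ f.eval (Nat.pair a (n + m)) ∧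
      ∀ j < n, ∃ w, w ≠ 0 ∧ w ∈ f.eval (Nat.pair a (j + m)) := by
  have : (Code.rfind' f).eval (Nat.pair a m) =
      (Nat.rfind fun n => (f.eval (Nat.pair a (n + m))).map fun m => decide (m = 0)).map (· + m) := by
    simp only [Code.eval, Nat.unpaired, Nat.unpair_pair]
    rfl
  rw [this]
  simp only [Part.mem_map_iff]
  constructor
  · rintro ⟨n, hn, rfl⟩
    have h1 := Nat.rfind_spec hn
    simp only [Part.mem_map_iff, decide_eq_true_eq] at h1
    obtain ⟨b, hb, rfl⟩ := h1
    refine ⟨n, rfl, hb, fun j hj => ?_⟩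
    have h2 := Nat.rfind_min hn hj
    simp only [Part.mem_map_iff, decide_eq_false_iff_not] at h2
    obtain ⟨w, hw, h0⟩ := h2
    exact ⟨w, h0, hw⟩
  · rintro ⟨n, rfl, h0, h1⟩
    refine ⟨n, ?_, rfl⟩
    refine Nat.mem_rfind.2 ⟨?_, ?_⟩
    · exact Part.mem_map_iff _ |>.2 ⟨0, h0, by simp⟩
    · intro j hj
      obtain ⟨w, hw, hw2⟩ := h1 j hj
      exact Part.mem_map_iff _ |>.2 ⟨w, hw2, by simp [hw]⟩

theorem mem_eval_comp (f g : Code) (x y : ℕ) :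
    y ∈ (Code.comp f g).eval x ↔ ∃ a, a ∈ g.eval x ∧ y ∈ f.eval a :=
  Part.mem_bind_iff

theorem sound [Finite V] (M : ℕ) (hO : AxO D R) (hP : AxP D R)
    (hJ : ∀ i < M, AxJ D R (Code.ofNatCode i)) :
    ∃ val : V → ℕ, (∀ x, D x → IsZ D R x → val x = 0) ∧
      (∀ x y, D x → D y → R 1 x y → val y = val x + 1) ∧
      ∀ c : Code, c.encodeCode < M → ∀ x y, D x → D y → TT R c x y → val y ∈ c.eval (val x) := by
  obtain ⟨val, hlt, hinj, hsurj, N, hN⟩ := exists_val D R hO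
  have hZ : ∀ x, D x → (IsZ D R x ↔ val x = 0) := by
    intro x hx
    constructor
    · intro h
      by_contra h0
      obtain ⟨y, hy, hy0⟩ := hsurj x hx 0 (by omega)
      exact h y hy ((hlt y x hy hx).2 (by omega))
    · intro h w hw hl
      have := (hlt w x hw hx).1 hl
      omega
  have hS : ∀ x y, D x → D y → R 1 x y → val y = val x + 1 := by
    intro x y hx hy h
    obtain ⟨h1, h2⟩ := hO.2.2.2 x hx y hy h
    have h3 := (hlt x y hx hy).1 h1
    by_contra h4
    obtain ⟨w, hw, hw1⟩ := hsurj y hy (val x + 1) (by omega)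
    exact h2 w hw ⟨(hlt _ _ hx hw).2 (by omega), (hlt _ _ hw hy).2 (by omega)⟩
  have hPair : ∀ k, ∀ n a b, D n → D a → D b → PP R n a b → val n = k →
      Nat.pair (val a) (val b) = k := by
    intro k
    induction k with
    | zero =>
      intro n a b hn ha hb h hk
      rcases hP n hn a ha b hb h with ⟨_, h2, h3⟩ | ⟨n', hn', a', ha', b', hb', h1, h2, h3⟩
      · rw [(hZ a ha).1 h2, (hZ b hb).1 h3]; rfl
      · have := hS _ _ hn' hn h1; omega
    | succ k ih =>
      intro n a b hn ha hb h hk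
      rcases hP n hn a ha b hb h with ⟨h1, h2, h3⟩ | ⟨n', hn', a', ha', b', hb', h1, h2, h3⟩
      · have := (hZ n hn).1 h1; omega
      · have h4 := hS _ _ hn' hn h1
        have h5 := ih n' a' b' hn' ha' hb' h2 (by omega)
        rw [← h5]
        apply pair_step
        rcases h3 with ⟨g1, g2, g3, g4⟩ | ⟨g1, g2, g3⟩ | ⟨g1, g2, g3⟩ | ⟨g1, g2, g3⟩
        · left
          exact ⟨(hlt _ _ ha' hb').1 g1, hS _ _ ha' ha g2, (hlt _ _ ha hb').1 g3, by rw [g4]⟩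
        · right; left
          exact ⟨hS _ _ ha' hb' g1, by rw [g2], (hZ _ hb).1 g3⟩
        · right; right; left
          exact ⟨(hlt _ _ hb' ha').1 g1, by rw [g2], hS _ _ hb' hb g3⟩
        · right; right; right
          exact ⟨by rw [g1], (hZ _ ha).1 g2, hS _ _ ha' hb g3⟩
  have hPP : ∀ n a b, D n → D a → D b → PP R n a b → val n = Nat.pair (val a) (val b) :=
    fun n a b hn ha hb h => (hPair _ n a b hn ha hb h rfl).symm
  refine ⟨val, fun x hx h => (hZ x hx).1 h, hS, ?_⟩
  intro c
  have hJ' : ∀ c : Code, c.encodeCode < M → ∀ x y, D x → D y → TT R c x y → Just D R c x y := by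
    intro c hc x y hx hy h
    have := hJ _ hc
    have e : Code.ofNatCode c.encodeCode = c := Denumerable.ofNat_encode c
    rw [e] at this
    exact this x hx y hy h
  have enc : ∀ c : Code, Encodable.encode c = c.encodeCode := fun _ => rfl
  induction c with
  | zero =>
    intro hc x y hx hy h
    have := (hZ y hy).1 (hJ' _ hc x y hx hy h)
    simp [Code.eval, this, pure, PFun.pure]
  | succ =>
    intro hc x y hx hy h
    have := hS x y hx hy (hJ' _ hc x y hx hy h)
    simp [Code.eval, this]
  | left =>
    intro hc x y hx hy h
    obtain ⟨b, hb, h1⟩ := hJ' _ hc x y hx hy h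
    have := hPP _ _ _ hx hy hb h1
    simp [Code.eval, this]
  | right =>
    intro hc x y hx hy h
    obtain ⟨b, hb, h1⟩ := hJ' _ hc x y hx hy h
    have := hPP _ _ _ hx hb hy h1
    simp [Code.eval, this]
  | pair f g hf hg =>
    intro hc x y hx hy h
    obtain ⟨a, ha, b, hb, h1, h2, h3⟩ := hJ' _ hc x y hx hy h
    have := Code.encode_lt_pair f g
    simp only [enc] at this
    have e1 := hf (by omega) x a hx ha h1
    have e2 := hg (by omega) x b hx hb h2
    have := hPP _ _ _ hy ha hb h3
    simp only [Code.eval, this, Seq.seq, Part.mem_bind_iff, Part.mem_map_iff]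
    simp only [Part.map_eq_map, Part.mem_map_iff]
    exact ⟨_, ⟨_, e1, rfl⟩, _, e2, rfl⟩
  | comp f g hf hg =>
    intro hc x y hx hy h
    obtain ⟨a, ha, h1, h2⟩ := hJ' _ hc x y hx hy h
    have := Code.encode_lt_comp f g
    simp only [enc] at this
    rw [mem_eval_comp]
    exact ⟨_, hg (by omega) x a hx ha h1, hf (by omega) a y ha hy h2⟩
  | prec f g hf hg =>
    intro hc
    have hl := Code.encode_lt_prec f g
    simp only [enc] at hl
    have key : ∀ k, ∀ x y a m, D x → D y → D a → D m → PP R x a m → val m = k →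
        TT R (.prec f g) x y → val y ∈ (Code.prec f g).eval (Nat.pair (val a) k) := by
      intro k
      induction k with
      | zero =>
        intro x y a m hx hy ha hm hp hk h
        obtain ⟨a', ha', m', hm', hp', h1⟩ := hJ' _ hc x y hx hy h
        have e1 := hPP _ _ _ hx ha hm hp
        have e2 := hPP _ _ _ hx ha' hm' hp'
        rw [e1, Nat.pair_eq_pair] at e2
        have : a = a' := hinj _ _ ha ha' e2.1
        subst this
        rw [Code.eval_prec_zero]
        rcases h1 with ⟨_, h2⟩ | ⟨m'', hm'', _, _, _, _, _, _, _, _, h2, _⟩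
        · exact hf (by omega) _ _ ha hy h2
        · have := hS _ _ hm'' hm' h2
          omega
      | succ k ih =>
        intro x y a m hx hy ha hm hp hk h
        obtain ⟨a', ha', m', hm', hp', h1⟩ := hJ' _ hc x y hx hy h
        have e1 := hPP _ _ _ hx ha hm hp
        have e2 := hPP _ _ _ hx ha' hm' hp'
        rw [e1, Nat.pair_eq_pair] at e2
        have : a = a' := hinj _ _ ha ha' e2.1
        subst this
        rw [Code.eval_prec_succ]
        rcases h1 with ⟨h2, _⟩ | ⟨m'', hm'', x', hx', w, hw, q, hq, q', hq', h2, h3, h4, h5, h6, h7⟩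
        · have := (hZ _ hm').1 h2
          omega
        · have e3 := hS _ _ hm'' hm' h2
          have e4 : val m'' = k := by omega
          have e5 := ih x' w a m'' hx' hw ha hm'' h3 e4 h4
          have e6 := hg (by omega) _ _ hq' hy h7
          rw [hPP _ _ _ hq' ha hq h6, hPP _ _ _ hq hm'' hw h5, e4] at e6
          simp only [Part.bind_eq_bind, Part.mem_bind_iff]
          exact ⟨_, e5, e6⟩
    intro x y hx hy h
    obtain ⟨a, ha, m, hm, hp, h1⟩ := hJ' _ hc x y hx hy h
    rw [hPP _ _ _ hx ha hm hp]
    exact key _ x y a m hx hy ha hm hp rfl h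
  | rfind' f hf =>
    intro hc
    have hl := Code.encode_lt_rfind' f
    simp only [enc] at hl
    have key : ∀ k, ∀ x y, D x → D y → (∀ a m, D a → D m → PP R x a m → N ≤ val m + k) →
        TT R (.rfind' f) x y → val y ∈ (Code.rfind' f).eval (val x) := by
      intro k
      induction k with
      | zero =>
        intro x y hx hy hk h
        obtain ⟨a, ha, m, hm, hp, h1⟩ := hJ' _ hc x y hx hy h
        have := hk a m ha hm hp
        have := hN m hm
        omega
      | succ k ih =>
        intro x y hx hy hk h
        obtain ⟨a, ha, m, hm, hp, w, hw, h1, h2⟩ := hJ' _ hc x y hx hy h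
        have e1 := hf (by omega) _ _ hx hw h1
        have e2 := hPP _ _ _ hx ha hm hp
        have e3 := hk a m ha hm hp
        rw [e2] at e1
        rcases h2 with ⟨h2, rfl⟩ | ⟨h2, m', hm', x', hx', h3, h4, h5⟩
        · rw [(hZ _ hw).1 h2] at e1
          rw [e2]
          rw [mem_eval_rfind]
          exact ⟨0, by simp, by simpa using e1, by simp⟩
        · have e4 := hS _ _ hm hm' h3
          have e5 := ih x' y hx' hy (by
            intro a2 m2 ha2 hm2 hp2
            have e6 := hPP _ _ _ hx' ha2 hm2 hp2
            rw [hPP _ _ _ hx' ha hm' h4, Nat.pair_eq_pair] at e6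
            omega) h5
          rw [hPP _ _ _ hx' ha hm' h4] at e5
          rw [e2]
          have h0 : val w ≠ 0 := fun h => h2 ((hZ _ hw).2 h)
          rw [mem_eval_rfind, e4] at e5
          rw [mem_eval_rfind]
          obtain ⟨n, hy', hq, hn⟩ := e5
          refine ⟨n + 1, by omega, ?_, ?_⟩
          · rwa [show n + 1 + val m = n + (val m + 1) by ring]
          · intro j hj
            rcases j with _ | j
            · exact ⟨val w, h0, by simpa using e1⟩
            · obtain ⟨b, hb0, hb⟩ := hn j (by omega)
              refine ⟨b, hb0, ?_⟩
              rwa [show j + 1 + val m = j + (val m + 1) by ring]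
    intro x y hx hy h
    exact key N x y hx hy (fun a m _ _ _ => by omega) h

end Core

section Compl
open Nat.Partrec (Code)

inductive BEv (N : ℕ) : Code → ℕ → ℕ → Prop
  | zero (x : ℕ) : BEv N .zero x 0
  | succ (x : ℕ) : BEv N .succ x (x + 1)
  | left (x : ℕ) : BEv N .left x x.unpair.1
  | right (x : ℕ) : BEv N .right x x.unpair.2
  | pair (f g : Code) (x a b : ℕ) (ha : a ≤ N) (hb : b ≤ N) (h1 : BEv N f x a) (h2 : BEv N g x b) :
      BEv N (.pair f g) x (Nat.pair a b)
  | comp (f g : Code) (x a y : ℕ) (ha : a ≤ N) (h1 : BEv N g x a) (h2 : BEv N f a y) :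
      BEv N (.comp f g) x y
  | prec0 (f g : Code) (a y : ℕ) (h : BEv N f a y) : BEv N (.prec f g) (Nat.pair a 0) y
  | prec1 (f g : Code) (a m w y : ℕ) (hw : w ≤ N) (hx : Nat.pair a m ≤ N)
      (hq : Nat.pair a (Nat.pair m w) ≤ N)
      (h1 : BEv N (.prec f g) (Nat.pair a m) w)
      (h2 : BEv N g (Nat.pair a (Nat.pair m w)) y) : BEv N (.prec f g) (Nat.pair a (m + 1)) y
  | rfind0 (f : Code) (a m : ℕ) (h : BEv N f (Nat.pair a m) 0) :
      BEv N (.rfind' f) (Nat.pair a m) m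
  | rfind1 (f : Code) (a m w y : ℕ) (hw : w ≤ N) (hw0 : w ≠ 0) (hx : Nat.pair a (m + 1) ≤ N)
      (h : BEv N f (Nat.pair a m) w)
      (h2 : BEv N (.rfind' f) (Nat.pair a (m + 1)) y) : BEv N (.rfind' f) (Nat.pair a m) y

theorem BEv.mono {N N' : ℕ} (hN : N ≤ N') {c : Code} {x y : ℕ} (h : BEv N c x y) :
    BEv N' c x y := by
  induction h with
  | zero x => exact .zero x
  | succ x => exact .succ x
  | left x => exact .left x
  | right x => exact .right x
  | pair f g x a b ha hb h1 h2 i1 i2 => exact .pair f g x a b (ha.trans hN) (hb.trans hN) i1 i2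
  | comp f g x a y ha h1 h2 i1 i2 => exact .comp f g x a y (ha.trans hN) i1 i2
  | prec0 f g a y h i => exact .prec0 f g a y i
  | prec1 f g a m w y hw hx hq h1 h2 i1 i2 =>
    exact .prec1 f g a m w y (hw.trans hN) (hx.trans hN) (hq.trans hN) i1 i2
  | rfind0 f a m h i => exact .rfind0 f a m i
  | rfind1 f a m w y hw hw0 hx h h2 i i2 =>
    exact .rfind1 f a m w y (hw.trans hN) hw0 (hx.trans hN) i i2

theorem exists_BEv (c : Code) : ∀ x y, y ∈ c.eval x → ∃ N, BEv N c x y := by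
  induction c with
  | zero =>
    intro x y h
    have : y = 0 := by simpa [Code.eval, pure, PFun.pure] using h
    subst this
    exact ⟨0, .zero x⟩
  | succ =>
    intro x y h
    have : y = x + 1 := by simpa [Code.eval] using h
    subst this
    exact ⟨0, .succ x⟩
  | left =>
    intro x y h
    have : y = x.unpair.1 := by simpa [Code.eval] using h
    subst this
    exact ⟨0, .left x⟩
  | right =>
    intro x y h
    have : y = x.unpair.2 := by simpa [Code.eval] using h
    subst this
    exact ⟨0, .right x⟩
  | pair f g hf hg =>
    intro x y h
    simp only [Code.eval, Seq.seq, Part.mem_bind_iff] at h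
    simp only [Part.map_eq_map, Part.mem_map_iff] at h
    obtain ⟨_, ⟨a, ha, rfl⟩, b, hb, rfl⟩ := h
    obtain ⟨N1, h1⟩ := hf _ _ ha
    obtain ⟨N2, h2⟩ := hg _ _ hb
    exact ⟨N1 + N2 + a + b, .pair f g x a b (by omega) (by omega) (h1.mono (by omega))
      (h2.mono (by omega))⟩
  | comp f g hf hg =>
    intro x y h
    rw [mem_eval_comp] at h
    obtain ⟨a, ha, hy⟩ := h
    obtain ⟨N1, h1⟩ := hg _ _ ha
    obtain ⟨N2, h2⟩ := hf _ _ hy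
    exact ⟨N1 + N2 + a, .comp f g x a y (by omega) (h1.mono (by omega)) (h2.mono (by omega))⟩
  | prec f g hf hg =>
    intro x y h
    obtain ⟨a, m, rfl⟩ : ∃ a m, x = Nat.pair a m := ⟨_, _, (Nat.pair_unpair x).symm⟩
    induction m generalizing y with
    | zero =>
      rw [Code.eval_prec_zero] at h
      obtain ⟨N, h1⟩ := hf _ _ h
      exact ⟨N, .prec0 f g a y h1⟩
    | succ m ih =>
      rw [Code.eval_prec_succ] at h
      simp only [Part.bind_eq_bind, Part.mem_bind_iff] at h
      obtain ⟨w, hw, hy⟩ := h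
      obtain ⟨N1, h1⟩ := ih _ hw
      obtain ⟨N2, h2⟩ := hg _ _ hy
      exact ⟨N1 + N2 + w + Nat.pair a m + Nat.pair a (Nat.pair m w),
        .prec1 f g a m w y (by omega) (by omega) (by omega) (h1.mono (by omega))
          (h2.mono (by omega))⟩
  | rfind' f hf =>
    intro x y h
    obtain ⟨a, m, rfl⟩ : ∃ a m, x = Nat.pair a m := ⟨_, _, (Nat.pair_unpair x).symm⟩
    rw [mem_eval_rfind] at h
    obtain ⟨n, rfl, h0, h1⟩ := h
    induction n generalizing m with
    | zero =>
      rw [Nat.zero_add] at h0 ⊢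
      obtain ⟨N, h2⟩ := hf _ _ h0
      exact ⟨N, .rfind0 f a m h2⟩
    | succ n ih =>
      obtain ⟨w, hw0, hw⟩ := h1 0 (by omega)
      rw [Nat.zero_add] at hw
      obtain ⟨N1, h2⟩ := ih (m + 1)
        (by rwa [show n + (m + 1) = n + 1 + m by ring])
        (fun j hj => by
          have := h1 (j + 1) (by omega)
          rwa [show j + (m + 1) = j + 1 + m by ring])
      obtain ⟨N2, h3⟩ := hf _ _ hw
      rw [show n + (m + 1) = n + 1 + m by ring] at h2
      exact ⟨N1 + N2 + w + Nat.pair a (m + 1), .rfind1 f a m w _ (by omega) hw0 (by omega)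
        (h3.mono (by omega)) (h2.mono (by omega))⟩

def R0 (N : ℕ) : ℕ → ℕ → ℕ → Prop
  | 0, x, y => x < y
  | 1, x, y => y = x + 1
  | 2, x, y => x.unpair.1 = y
  | 3, x, y => x.unpair.2 = y
  | (e + 4), x, y => BEv N (Code.ofNatCode e) x y

theorem complete {V : Type} (D : V → Prop) (R : ℕ → V → V → Prop) (N M : ℕ) (nu : ℕ → V)
    (hD : ∀ v, D v ↔ ∃ n ≤ N, v = nu n)
    (hR : ∀ e < 4 + M, ∀ x ≤ N, ∀ y ≤ N, (R e (nu x) (nu y) ↔ R0 N e x y)) :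
    AxO D R ∧ AxP D R ∧ (∀ i < M, AxJ D R (Code.ofNatCode i)) ∧ IsZ D R (nu 0) := by
  have h0 : ∀ x ≤ N, ∀ y ≤ N, (R 0 (nu x) (nu y) ↔ x < y) := hR 0 (by omega)
  have h1 : ∀ x ≤ N, ∀ y ≤ N, (R 1 (nu x) (nu y) ↔ y = x + 1) := hR 1 (by omega)
  have hZ : ∀ x ≤ N, (IsZ D R (nu x) ↔ x = 0) := by
    intro x hx
    constructor
    · intro h
      by_contra hx0
      exact h (nu 0) ((hD _).2 ⟨0, by omega, rfl⟩) ((h0 _ (by omega) _ hx).2 (by omega))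
    · rintro rfl w hw
      obtain ⟨n, hn, rfl⟩ := (hD _).1 hw
      rw [h0 _ hn _ hx]
      omega
  have hP : ∀ n ≤ N, ∀ a ≤ N, ∀ b ≤ N, (PP R (nu n) (nu a) (nu b) ↔ n = Nat.pair a b) := by
    intro n hn a ha b hb
    unfold PP
    rw [hR 2 (by omega) n hn a ha, hR 3 (by omega) n hn b hb]
    simp only [R0]
    constructor
    · rintro ⟨rfl, rfl⟩; exact (Nat.pair_unpair n).symm
    · rintro rfl; simp
  have hT : ∀ c : Code, c.encodeCode < M → ∀ x ≤ N, ∀ y ≤ N,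
      (TT R c (nu x) (nu y) ↔ BEv N c x y) := by
    intro c hc x hx y hy
    unfold TT
    rw [hR _ (by omega) x hx y hy, Nat.add_comm]
    have e : Code.ofNatCode c.encodeCode = c := Denumerable.ofNat_encode c
    simp only [R0, e]
  have hDn : ∀ n ≤ N, D (nu n) := fun n hn => (hD _).2 ⟨n, hn, rfl⟩
  refine ⟨⟨?_, ?_, ?_, ?_⟩, ?_, ?_, (hZ 0 (by omega)).2 rfl⟩
  · intro x hx
    obtain ⟨n, hn, rfl⟩ := (hD _).1 hx
    rw [h0 _ hn _ hn]; omega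
  · intro x hx y hy w hw
    obtain ⟨n, hn, rfl⟩ := (hD _).1 hx
    obtain ⟨m, hm, rfl⟩ := (hD _).1 hy
    obtain ⟨k, hk, rfl⟩ := (hD _).1 hw
    rw [h0 _ hn _ hm, h0 _ hm _ hk, h0 _ hn _ hk]; omega
  · intro x hx y hy
    obtain ⟨n, hn, rfl⟩ := (hD _).1 hx
    obtain ⟨m, hm, rfl⟩ := (hD _).1 hy
    rw [h0 _ hn _ hm, h0 _ hm _ hn]
    rcases Nat.lt_trichotomy n m with h | h | h
    · exact .inl h
    · exact .inr (.inl (by rw [h]))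
    · exact .inr (.inr h)
  · intro x hx y hy
    obtain ⟨n, hn, rfl⟩ := (hD _).1 hx
    obtain ⟨m, hm, rfl⟩ := (hD _).1 hy
    rw [h0 _ hn _ hm, h1 _ hn _ hm]
    intro h
    refine ⟨by omega, ?_⟩
    intro w hw
    obtain ⟨k, hk, rfl⟩ := (hD _).1 hw
    rw [h0 _ hn _ hk, h0 _ hk _ hm]; omega
  · intro n' hn' a' ha' b' hb' h
    obtain ⟨n, hn, rfl⟩ := (hD _).1 hn'
    obtain ⟨a, ha, rfl⟩ := (hD _).1 ha'
    obtain ⟨b, hb, rfl⟩ := (hD _).1 hb'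
    rw [hP n hn a ha b hb] at h
    rcases Nat.eq_zero_or_pos n with hn0 | hn0
    · left
      have h2 : Nat.pair a b = Nat.pair 0 0 := by rw [← h, hn0]; rfl
      rw [Nat.pair_eq_pair] at h2
      exact ⟨(hZ _ hn).2 hn0, (hZ _ ha).2 h2.1, (hZ _ hb).2 h2.2⟩
    · right
      obtain ⟨c, d, hcd⟩ : ∃ c d, n - 1 = Nat.pair c d := ⟨_, _, (Nat.pair_unpair _).symm⟩
      have hc : c ≤ N := (Nat.left_le_pair c d).trans (by omega)
      have hd : d ≤ N := (Nat.right_le_pair c d).trans (by omega)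
      refine ⟨nu (n - 1), hDn _ (by omega), nu c, hDn _ hc, nu d, hDn _ hd, ?_, ?_, ?_⟩
      · rw [h1 _ (by omega) _ hn]; omega
      · rw [hP _ (by omega) _ hc _ hd]; exact hcd
      · have key : ∀ a2 b2, Nat.pair a2 b2 = Nat.pair c d + 1 → a = a2 ∧ b = b2 := by
          intro a2 b2 h2
          rw [← Nat.pair_eq_pair]; omega
        unfold StepP
        rcases Nat.lt_trichotomy c d with h2 | h2 | h2
        · by_cases h3 : c + 1 < d
          · obtain ⟨rfl, rfl⟩ := key (c + 1) d (pair_step (.inl ⟨h2, rfl, h3, rfl⟩))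
            left
            exact ⟨(h0 _ hc _ hd).2 h2, (h1 _ hc _ ha).2 rfl, (h0 _ ha _ hd).2 h3, rfl⟩
          · obtain ⟨rfl, rfl⟩ := key d 0 (pair_step (.inr (.inl ⟨by omega, rfl, rfl⟩)))
            right; left
            exact ⟨(h1 _ hc _ hd).2 (by omega), rfl, (hZ _ hb).2 rfl⟩
        · obtain ⟨rfl, rfl⟩ := key 0 (c + 1) (pair_step (.inr (.inr (.inr ⟨h2, rfl, rfl⟩))))
          right; right; right
          exact ⟨by rw [h2], (hZ _ ha).2 rfl, (h1 _ hc _ hb).2 rfl⟩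
        · obtain ⟨rfl, rfl⟩ := key c (d + 1) (pair_step (.inr (.inr (.inl ⟨h2, rfl, rfl⟩))))
          right; right; left
          exact ⟨(h0 _ hd _ hc).2 h2, rfl, (h1 _ hd _ hb).2 rfl⟩
  · intro i hi x' hx' y' hy' h
    obtain ⟨x, hx, rfl⟩ := (hD _).1 hx'
    obtain ⟨y, hy, rfl⟩ := (hD _).1 hy'
    have hi' : (Code.ofNatCode i).encodeCode < M := by
      have : (Code.ofNatCode i).encodeCode = i := Denumerable.encode_ofNat (α := Code) i
      omega
    generalize Code.ofNatCode i = c at h hi'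
    rw [hT c hi' x hx y hy] at h
    have enc : ∀ c : Code, Encodable.encode c = c.encodeCode := fun _ => rfl
    cases h with
    | zero => exact (hZ _ hy).2 rfl
    | succ => exact (h1 _ hx _ hy).2 rfl
    | left =>
      have hb : x.unpair.2 ≤ N := (Nat.unpair_right_le x).trans hx
      exact ⟨nu x.unpair.2, hDn _ hb, (hP _ hx _ hy _ hb).2 (Nat.pair_unpair x).symm⟩
    | right =>
      have hb : x.unpair.1 ≤ N := (Nat.unpair_left_le x).trans hx
      exact ⟨nu x.unpair.1, hDn _ hb, (hP _ hx _ hb _ hy).2 (Nat.pair_unpair x).symm⟩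
    | pair f g x a b ha hb g1 g2 =>
      have := Code.encode_lt_pair f g
      simp only [enc] at this
      exact ⟨nu a, hDn _ ha, nu b, hDn _ hb, (hT f (by omega) x hx a ha).2 g1,
        (hT g (by omega) x hx b hb).2 g2, (hP _ hy _ ha _ hb).2 rfl⟩
    | comp f g x a y ha g1 g2 =>
      have := Code.encode_lt_comp f g
      simp only [enc] at this
      exact ⟨nu a, hDn _ ha, (hT g (by omega) x hx a ha).2 g1, (hT f (by omega) a ha y hy).2 g2⟩
    | prec0 f g a y g1 =>
      have := Code.encode_lt_prec f g
      simp only [enc] at this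
      have ha : a ≤ N := (Nat.left_le_pair a 0).trans hx
      exact ⟨nu a, hDn _ ha, nu 0, hDn _ (by omega), (hP _ hx _ ha _ (by omega)).2 rfl,
        .inl ⟨(hZ _ (by omega)).2 rfl, (hT f (by omega) a ha y hy).2 g1⟩⟩
    | prec1 f g a m w y hw hxx hq g1 g2 =>
      have := Code.encode_lt_prec f g
      simp only [enc] at this
      have ha : a ≤ N := (Nat.left_le_pair _ _).trans hx
      have hm1 : m + 1 ≤ N := (Nat.right_le_pair _ _).trans hx
      have hm : m ≤ N := by omega
      have hmw : Nat.pair m w ≤ N := (Nat.right_le_pair _ _).trans hq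
      exact ⟨nu a, hDn _ ha, nu (m + 1), hDn _ hm1, (hP _ hx _ ha _ hm1).2 rfl,
        .inr ⟨nu m, hDn _ hm, nu (Nat.pair a m), hDn _ hxx, nu w, hDn _ hw,
          nu (Nat.pair m w), hDn _ hmw, nu (Nat.pair a (Nat.pair m w)), hDn _ hq,
          (h1 _ hm _ hm1).2 rfl, (hP _ hxx _ ha _ hm).2 rfl, (hT _ hi' _ hxx _ hw).2 g1,
          (hP _ hmw _ hm _ hw).2 rfl, (hP _ hq _ ha _ hmw).2 rfl,
          (hT _ (by omega) _ hq _ hy).2 g2⟩⟩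
    | rfind0 f a m g1 =>
      have := Code.encode_lt_rfind' f
      simp only [enc] at this
      have ha : a ≤ N := (Nat.left_le_pair _ _).trans hx
      exact ⟨nu a, hDn _ ha, nu y, hDn _ hy, (hP _ hx _ ha _ hy).2 rfl,
        nu 0, hDn _ (by omega), (hT _ (by omega) _ hx _ (by omega)).2 g1,
        .inl ⟨(hZ _ (by omega)).2 rfl, rfl⟩⟩
    | rfind1 f a m w y hw hw0 hxx g1 g2 =>
      have := Code.encode_lt_rfind' f
      simp only [enc] at this
      have ha : a ≤ N := (Nat.left_le_pair _ _).trans hx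
      have hm : m ≤ N := (Nat.right_le_pair _ _).trans hx
      have hm1 : m + 1 ≤ N := (Nat.right_le_pair _ _).trans hxx
      exact ⟨nu a, hDn _ ha, nu m, hDn _ hm, (hP _ hx _ ha _ hm).2 rfl,
        nu w, hDn _ hw, (hT _ (by omega) _ hx _ hw).2 g1,
        .inr ⟨fun h => hw0 ((hZ _ hw).1 h), nu (m + 1), hDn _ hm1, nu _, hDn _ hxx,
          (h1 _ hm _ hm1).2 rfl, (hP _ hxx _ ha _ hm1).2 rfl, (hT _ hi' _ hxx _ hy).2 g2⟩⟩

end Compl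

section Form
open Nat.Partrec (Code)

/-- The adjacency relation of a structure for the language of graphs. -/
def sAdj {V : Type} (S : Language.graph.Structure V) (a b : V) : Prop := S.RelMap .adj ![a, b]

/-- Uniform first-order definability over all structures of the language of graphs. -/
def FDef {α : Type} (P : ∀ V : Type, (V → V → Prop) → (α → V) → Prop) : Prop :=
  ∃ φ : Language.graph.Formula α, ∀ (V : Type) (S : Language.graph.Structure V) (v : α → V),
    φ.Realize v ↔ P V (sAdj S) v

theorem FDef.adj {α : Type} (i j : α) : FDef (fun _ adj (v : α → _) => adj (v i) (v j)) :=
  ⟨Language.Relations.formula₂ (L := Language.graph) Language.adj (.var i) (.var j),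
    fun V S v => by
      rw [Language.Formula.realize_rel₂]
      rfl⟩

theorem FDef.eq {α : Type} (i j : α) : FDef (fun _ _ (v : α → _) => v i = v j) :=
  ⟨(Language.Term.var i).equal (.var j), fun V S v => by
    rw [Language.Formula.realize_equal]; rfl⟩

theorem FDef.not {α : Type} {P : ∀ V : Type, (V → V → Prop) → (α → V) → Prop} (h : FDef P) :
    FDef (fun V a v => ¬ P V a v) := by
  obtain ⟨φ, hφ⟩ := h
  exact ⟨φ.not, fun V S v => by rw [Language.Formula.realize_not, hφ]⟩

theorem FDef.and {α : Type} {P Q : ∀ V : Type, (V → V → Prop) → (α → V) → Prop} (h : FDef P)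
    (h' : FDef Q) : FDef (fun V a v => P V a v ∧ Q V a v) := by
  obtain ⟨φ, hφ⟩ := h
  obtain ⟨φ', hφ'⟩ := h'
  exact ⟨φ ⊓ φ', fun V S v => by rw [Language.Formula.realize_inf, hφ, hφ']⟩

theorem FDef.or {α : Type} {P Q : ∀ V : Type, (V → V → Prop) → (α → V) → Prop} (h : FDef P)
    (h' : FDef Q) : FDef (fun V a v => P V a v ∨ Q V a v) := by
  obtain ⟨φ, hφ⟩ := h
  obtain ⟨φ', hφ'⟩ := h'
  exact ⟨φ ⊔ φ', fun V S v => by rw [Language.Formula.realize_sup, hφ, hφ']⟩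

theorem FDef.imp {α : Type} {P Q : ∀ V : Type, (V → V → Prop) → (α → V) → Prop} (h : FDef P)
    (h' : FDef Q) : FDef (fun V a v => P V a v → Q V a v) := by
  obtain ⟨φ, hφ⟩ := h
  obtain ⟨φ', hφ'⟩ := h'
  exact ⟨φ.imp φ', fun V S v => by rw [Language.Formula.realize_imp, hφ, hφ']⟩

theorem FDef.ex {α : Type} {Q : ∀ V : Type, (V → V → Prop) → (α → V) → V → Prop}
    (h : FDef (fun V a (w : Option α → V) => Q V a (fun i => w (some i)) (w none))) :
    FDef (fun V a v => ∃ x, Q V a v x) := by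
  obtain ⟨φ, hφ⟩ := h
  let ψ : Language.graph.BoundedFormula α 1 :=
    Language.BoundedFormula.relabel (n := 1) (k := 0)
      (fun o : Option α => o.elim (Sum.inr (0 : Fin 1)) Sum.inl) φ
  refine ⟨ψ.ex, fun V S v => ?_⟩
  have : ∀ x : V, ψ.Realize v (Fin.snoc default x) ↔ Q V (sAdj S) v x := by
    intro x
    have h1 : ψ.Realize v (Fin.snoc default x) ↔ _ :=
      Language.BoundedFormula.realize_relabel (n := 0) (m := 1)
    rw [h1]
    have h2 := hφ V S (fun o => o.elim x v)
    simp only [Option.elim] at h2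
    rw [← h2, Language.Formula.Realize]
    have e1 : (Sum.elim v (((Fin.snoc default x : Fin (0 + 1) → V)) ∘ Fin.castAdd 0) ∘
      fun o : Option α => o.elim (Sum.inr (0 : Fin 1)) Sum.inl) = (fun o : Option α => o.elim x v) := by
      funext o
      cases o with
      | none => simp [Fin.snoc]
      | some a => rfl
    exact iff_of_eq (congr (congrArg _ e1) (Subsingleton.elim _ _))
  unfold Language.Formula.Realize
  rw [Language.BoundedFormula.realize_ex]
  exact exists_congr this

theorem FDef.all {α : Type} {Q : ∀ V : Type, (V → V → Prop) → (α → V) → V → Prop}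
    (h : FDef (fun V a (w : Option α → V) => Q V a (fun i => w (some i)) (w none))) :
    FDef (fun V a v => ∀ x, Q V a v x) := by
  obtain ⟨φ, hφ⟩ := FDef.not (FDef.ex (Q := fun V a v x => ¬ Q V a v x) (FDef.not h))
  refine ⟨φ, fun V S v => ?_⟩
  rw [hφ]
  push Not
  rfl

theorem FDef.forall_lt {α : Type} (M : ℕ)
    {P : ℕ → ∀ V : Type, (V → V → Prop) → (α → V) → Prop} (h : ∀ i, FDef (P i)) :
    FDef (fun V a v => ∀ i < M, P i V a v) := by
  induction M with
  | zero => exact ⟨⊤, fun V S v => by simp⟩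
  | succ M ih =>
    obtain ⟨φ, hφ⟩ := FDef.and ih (h M)
    refine ⟨φ, fun V S v => ?_⟩
    rw [hφ]
    constructor
    · rintro ⟨h1, h2⟩ i hi
      rcases Nat.lt_succ_iff_lt_or_eq.1 hi with h | rfl
      · exact h1 i h
      · exact h2
    · intro h
      exact ⟨fun i hi => h i (by omega), h M (by omega)⟩

variable {V : Type} (adj : V → V → Prop) (g : ℕ → V)

def DG (x : V) : Prop := adj x (g 0)

def RG (e : ℕ) (x y : V) : Prop :=
  ∃ t, ∃ a, adj t (g (4 + e)) ∧ adj t x ∧ adj t a ∧ adj a (g 1) ∧ adj a y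

theorem FDef.dg {α : Type} (ι : ℕ → α) (x : α) :
    FDef (fun _ adj (v : α → _) => DG adj (fun i => v (ι i)) (v x)) := FDef.adj _ _

theorem FDef.rg {α : Type} (e : ℕ) (ι : ℕ → α) (x y : α) :
    FDef (fun _ adj (v : α → _) => RG adj (fun i => v (ι i)) e (v x) (v y)) := by
  unfold RG
  refine FDef.ex (FDef.ex (FDef.and ?_ (FDef.and ?_ (FDef.and ?_ (FDef.and ?_ ?_))))) <;>
    exact FDef.adj _ _

def Phi (M : ℕ) (c : Code) : Prop :=
  AxO (DG adj g) (RG adj g) ∧ AxP (DG adj g) (RG adj g) ∧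
  (∀ i < M, AxJ (DG adj g) (RG adj g) (Code.ofNatCode i)) ∧
  DG adj g (g (8 + M)) ∧ IsZ (DG adj g) (RG adj g) (g (8 + M)) ∧ DG adj g (g 3) ∧
  ∃ y, DG adj g y ∧ TT (RG adj g) c (g 3) y

theorem FDef.just (c : Code) :
    FDef (fun _ adj (v : ℕ → _) => AxJ (DG adj (fun i => v i)) (RG adj (fun i => v i)) c) := by
  cases c <;> simp only [AxJ, Just, TT, PP, IsZ] <;>
  repeat' first
    | exact FDef.dg _ _
    | exact FDef.rg _ _ _ _
    | exact FDef.eq _ _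
    | apply FDef.and
    | apply FDef.or
    | apply FDef.not
    | apply FDef.imp
    | apply FDef.all
    | apply FDef.ex

theorem FDef.phi (M : ℕ) (c : Code) :
    FDef (fun _ adj (v : ℕ → _) => Phi adj (fun i => v i) M c) := by
  unfold Phi
  refine FDef.and ?_ (FDef.and ?_ (FDef.and (FDef.forall_lt M fun i => FDef.just _) ?_)) <;>
  simp only [AxO, AxP, StepP, TT, PP, IsZ] <;>
  repeat' first
    | exact FDef.dg _ _
    | exact FDef.rg _ _ _ _
    | exact FDef.eq _ _
    | apply FDef.and
    | apply FDef.or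
    | apply FDef.not
    | apply FDef.imp
    | apply FDef.all
    | apply FDef.ex

end Form

section Sent
open Nat.Partrec (Code)
open FirstOrder.Language (BoundedFormula)

/-- Chain of `k` successor steps from `y` to `g 3`. -/
def Ch {V : Type} (adj : V → V → Prop) (g : ℕ → V) : ℕ → V → Prop
  | 0, y => y = g 3
  | k + 1, y => ∃ t a y', adj t (g 5) ∧ adj t y ∧ adj t a ∧ adj a (g 1) ∧ adj a y' ∧
      adj y' (g 0) ∧ Ch adj g k y'

theorem Ch_congr {V : Type} (adj : V → V → Prop) (g g' : ℕ → V) (h : ∀ i ≤ 5, g i = g' i) (k : ℕ) :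
    ∀ y, Ch adj g k y ↔ Ch adj g' k y := by
  induction k with
  | zero => intro y; simp only [Ch, h 3 (by omega)]
  | succ k ih =>
    intro y
    simp only [Ch, ih, h 5 (by omega), h 1 (by omega), h 0 (by omega)]

/-- The `i`-th bound variable as a term. -/
def vt (n i : ℕ) : Language.graph.Term (Empty ⊕ Fin (n + 1)) :=
  .var (Sum.inr (Fin.ofNat (n + 1) i))

def atF (n i j : ℕ) : Language.graph.BoundedFormula Empty (n + 1) :=
  .rel (l := 2) Language.adj ![vt n i, vt n j]

/-- Negated chain formula. -/
def nc : ℕ → (m : ℕ) → Language.graph.BoundedFormula Empty (m + 1)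
  | 0, m => .imp (.equal (vt m m) (vt m 3)) .falsum
  | k + 1, m => .all (.all (.all (.imp (atF (m+3) (m+1) 5) (.imp (atF (m+3) (m+1) m)
      (.imp (atF (m+3) (m+1) (m+2)) (.imp (atF (m+3) (m+2) 1) (.imp (atF (m+3) (m+2) (m+3))
      (.imp (atF (m+3) (m+3) 0) (nc k (m+3))))))))))

theorem realize_atF {V : Type} (S : Language.graph.Structure V) (v : Empty → V) (n : ℕ)
    (xs : Fin (n + 1) → V) (f : ℕ → V) (hf : ∀ i : Fin (n + 1), xs i = f i) (i j : ℕ)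
    (hi : i ≤ n) (hj : j ≤ n) :
    (atF n i j).Realize v xs ↔ sAdj S (f i) (f j) := by
  unfold atF
  simp only [BoundedFormula.Realize, sAdj]
  have : (fun k => Language.Term.realize (Sum.elim v xs) ((![vt n i, vt n j] :
      Fin 2 → Language.graph.Term (Empty ⊕ Fin (n + 1))) k)) = ![f i, f j] := by
    funext k
    fin_cases k
    · simp [vt, hf, Nat.mod_eq_of_lt (Nat.lt_succ_of_le hi)]
    · simp [vt, hf, Nat.mod_eq_of_lt (Nat.lt_succ_of_le hj)]
  exact iff_of_eq (congrArg _ this)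

theorem realize_nc {V : Type} (S : Language.graph.Structure V) (v : Empty → V) (k : ℕ) :
    ∀ (m : ℕ) (_ : 5 ≤ m) (xs : Fin (m + 1) → V) (f : ℕ → V)
      (_ : ∀ i : Fin (m + 1), xs i = f i),
    ((nc k m).Realize v xs ↔ ¬ Ch (sAdj S) f k (f m)) := by
  induction k with
  | zero =>
    intro m hm xs f hf
    simp [nc, Ch, BoundedFormula.Realize, vt, hf, Nat.mod_eq_of_lt (Nat.lt_succ_of_le
      (show 3 ≤ m by omega))]
  | succ k ih =>
    intro m hm xs f hf
    have key : ∀ t a y', ∀ (f' : ℕ → V), (f' = fun i => if i = m+1 then t else if i = m+2 then a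
        else if i = m+3 then y' else f i) → ∀ i : Fin (m + 3 + 1),
        (Fin.snoc (Fin.snoc (Fin.snoc xs t : Fin (m+1+1) → V) a : Fin (m+1+1+1) → V) y' :
          Fin (m+1+1+1+1) → V) i = f' i := by
      intro t a y' f' hf' i
      obtain ⟨i, hi⟩ := i
      subst hf'
      rcases (by omega : i < m+1 ∨ i = m+1 ∨ i = m+2 ∨ i = m+3) with h | h | h | h
      · have h1 : i < m + 1 + 1 := by omega
        have h2 : i < m + 1 + 1 + 1 := by omega
        have e1 : i ≠ m+1 := by omega
        have e2 : i ≠ m+2 := by omega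
        have e3 : i ≠ m+3 := by omega
        beta_reduce
        rw [if_neg e1, if_neg e2, if_neg e3, ← hf ⟨i, h⟩]
        unfold Fin.snoc
        rw [dif_pos h2]
        simp only [cast_eq]
        rw [dif_pos (show ((⟨i, hi⟩ : Fin (m+3+1)).castLT h2).val < m + 1 + 1 from h1)]
        rw [dif_pos (show (((⟨i, hi⟩ : Fin (m+3+1)).castLT h2).castLT h1).val < m + 1 from h)]
        rfl
      · subst h; simp [Fin.snoc]
      · subst h; simp [Fin.snoc]
      · subst h; simp [Fin.snoc]
    have main : ∀ t a y', ((BoundedFormula.imp (atF (m+3) (m+1) 5) (.imp (atF (m+3) (m+1) m)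
      (.imp (atF (m+3) (m+1) (m+2)) (.imp (atF (m+3) (m+2) 1) (.imp (atF (m+3) (m+2) (m+3))
      (.imp (atF (m+3) (m+3) 0) (nc k (m+3)))))))).Realize v
        (Fin.snoc (Fin.snoc (Fin.snoc xs t : Fin (m+1+1) → V) a : Fin (m+1+1+1) → V) y' :
          Fin (m+1+1+1+1) → V) ↔
        (sAdj S t (f 5) → sAdj S t (f m) → sAdj S t a → sAdj S a (f 1) → sAdj S a y' →
          sAdj S y' (f 0) → ¬ Ch (sAdj S) f k y')) := by
      intro t a y'
      obtain ⟨f', hf'⟩ : ∃ f' : ℕ → V, f' = fun i => if i = m+1 then t else if i = m+2 then a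
        else if i = m+3 then y' else f i := ⟨_, rfl⟩
      have hk := key t a y' f' hf'
      have hk' : ∀ i < m + 1, f' i = f i := by
        intro i hi
        subst hf'
        have e1 : i ≠ m+1 := by omega
        have e2 : i ≠ m+2 := by omega
        have e3 : i ≠ m+3 := by omega
        simp only [e1, e2, e3, if_false]
      simp only [BoundedFormula.realize_imp]
      rw [realize_atF S v (m+3) _ _ hk _ _ (by omega) (by omega),
        realize_atF S v (m+3) _ _ hk _ _ (by omega) (by omega),
        realize_atF S v (m+3) _ _ hk _ _ (by omega) (by omega),
        realize_atF S v (m+3) _ _ hk _ _ (by omega) (by omega),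
        realize_atF S v (m+3) _ _ hk _ _ (by omega) (by omega),
        realize_atF S v (m+3) _ _ hk _ _ (by omega) (by omega),
        ih (m+3) (by omega) _ _ hk]
      rw [hk' 5 (by omega), hk' m (by omega), hk' 1 (by omega), hk' 0 (by omega),
        Ch_congr _ _ f (fun i hi => hk' i (by omega))]
      have e1 : f' (m + 1) = t := by subst hf'; simp
      have e2 : f' (m + 2) = a := by subst hf'; simp
      have e3 : f' (m + 3) = y' := by subst hf'; simp
      rw [e1, e2, e3]
    simp only [nc, BoundedFormula.realize_all]
    rw [Ch]
    push Not
    exact forall_congr' fun t => forall_congr' fun a => forall_congr' fun y' => main t a y'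

/-- The parameter assignment extended to all natural numbers. -/
def ext {V : Type} (r : ℕ) (w : Fin (r + 1) → V) (i : ℕ) : V := w (Fin.ofNat (r + 1) i)

/-- The formula `Phi` as a bounded formula. -/
theorem exists_PhiF (M : ℕ) (c : Code) :
    ∃ Φ : Language.graph.BoundedFormula Empty (8 + M + 1),
      ∀ (V : Type) (S : Language.graph.Structure V) (v : Empty → V) (w : Fin (8 + M + 1) → V),
        Φ.Realize v w ↔ Phi (sAdj S) (ext (8 + M) w) M c := by
  obtain ⟨φ, hφ⟩ := FDef.phi M c
  refine ⟨BoundedFormula.relabel (n := 8 + M + 1) (k := 0)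
    (fun i : ℕ => Sum.inr (Fin.ofNat (8 + M + 1) i)) φ, fun V S v w => ?_⟩
  have h : _ ↔ Phi (sAdj S) (ext (8 + M) w) M c := hφ V S (ext (8 + M) w)
  rw [Language.Formula.Realize] at h
  rw [← h]
  refine (Language.BoundedFormula.realize_relabel (n := 0) (m := 8 + M + 1)).trans ?_
  exact iff_of_eq (congr (congrArg _ (by funext i; rfl)) (Subsingleton.elim _ _))

theorem exists_sent (M : ℕ) (c : Code) :
    ∃ ψ : ℕ → Language.graph.Sentence,
      (∃ pre suf, ∀ k, (ψ k).listEncode = pre ++ (nc k (8 + M)).listEncode ++ suf) ∧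
      ∀ (k : ℕ) (V : Type) (S : Language.graph.Structure V),
        (ψ k).Realize V ↔ ∃ w : Fin (8 + M + 1) → V, Phi (sAdj S) (ext (8 + M) w) M c ∧
          Ch (sAdj S) (ext (8 + M) w) k (ext (8 + M) w (8 + M)) := by
  obtain ⟨Φ, hΦ⟩ := exists_PhiF M c
  have hall : ∀ n, ∃ pre, ∀ φ : Language.graph.BoundedFormula Empty n,
      φ.alls.listEncode = pre ++ φ.listEncode := by
    intro n
    induction n with
    | zero => exact ⟨[], fun φ => rfl⟩
    | succ n ih =>
      obtain ⟨pre, hpre⟩ := ih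
      refine ⟨pre ++ [Sum.inr (Sum.inr 1)], fun φ => ?_⟩
      rw [BoundedFormula.alls, hpre]
      simp [BoundedFormula.listEncode]
  obtain ⟨pre, hpre⟩ := hall (8 + M + 1)
  refine ⟨fun k => BoundedFormula.imp (BoundedFormula.alls (BoundedFormula.imp Φ (nc k (8 + M))))
    BoundedFormula.falsum, ?_, ?_⟩
  · refine ⟨Sum.inr (Sum.inr 0) :: pre ++ Sum.inr (Sum.inr 0) :: Φ.listEncode,
      [Sum.inr (Sum.inr (0 + 2))], fun k => ?_⟩
    simp [BoundedFormula.listEncode, hpre]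
  · intro k V S
    unfold Language.Sentence.Realize Language.Formula.Realize
    rw [BoundedFormula.realize_imp]
    have := BoundedFormula.realize_alls (φ := BoundedFormula.imp Φ (nc k (8 + M)))
      (v := (default : Empty → V))
    unfold Language.Formula.Realize at this
    rw [this]
    simp only [BoundedFormula.realize_imp]
    have hn : ∀ w : Fin (8 + M + 1) → V, (nc k (8 + M)).Realize default w ↔
        ¬ Ch (sAdj S) (ext (8 + M) w) k (ext (8 + M) w (8 + M)) := fun w =>
      realize_nc S default k (8 + M) (by omega) w (ext (8 + M) w) (fun i => by simp [ext])
    simp only [hn, hΦ, BoundedFormula.Realize]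
    rw [imp_false]
    push Not
    rfl

theorem Ch_val {V : Type} (adj : V → V → Prop) (g : ℕ → V) (val : V → ℕ)
    (hs : ∀ x y, DG adj g x → DG adj g y → RG adj g 1 x y → val y = val x + 1) (k : ℕ) :
    ∀ y, DG adj g y → Ch adj g k y → val (g 3) = val y + k := by
  induction k with
  | zero => intro y _ h; rw [Ch] at h; rw [h]; rfl
  | succ k ih =>
    rintro y hy ⟨t, a, y', h1, h2, h3, h4, h5, h6, h7⟩
    rw [ih y' h6 h7, hs y y' hy h6 ⟨t, a, h1, h2, h3, h4, h5⟩]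
    omega

theorem sound_sent {V : Type} [Finite V] (adj : V → V → Prop) (g : ℕ → V) (M : ℕ) (c : Code)
    (hc : c.encodeCode < M) (k : ℕ) (h : Phi adj g M c) (h' : Ch adj g k (g (8 + M))) :
    (c.eval k).Dom := by
  obtain ⟨hO, hP, hJ, hz, hz', hu, y, hy, hT⟩ := h
  obtain ⟨val, v0, v1, v2⟩ := sound (DG adj g) (RG adj g) M hO hP hJ
  have := Ch_val adj g val v1 k _ hz h'
  rw [v0 _ hz hz', zero_add] at this
  have h2 := v2 c hc _ _ hu hy hT
  rw [this] at h2
  exact Part.dom_iff_mem.2 ⟨_, h2⟩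

end Sent

section Enc
open FirstOrder.Language (BoundedFormula)

/-- The alphabet for formulas of the language of graphs. -/
abbrev Sy := (Σ k, Language.graph.Term (Empty ⊕ Fin k)) ⊕ ((Σ n, Language.graph.Relations n) ⊕ ℕ)

theorem encode_list_map {α : Type} [Encodable α] (l : List α) :
    Encodable.encode l = Encodable.encode (l.map Encodable.encode) := by
  induction l with
  | nil => rfl
  | cons a l ih => rw [List.map_cons, Encodable.encode_list_cons, Encodable.encode_list_cons, ih]; rfl

def blk (m : ℕ) : List Sy :=
  [Sum.inr (Sum.inr 1), Sum.inr (Sum.inr 1), Sum.inr (Sum.inr 1)] ++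
  ([Sum.inr (Sum.inr 0)] ++ (atF (m+3) (m+1) 5).listEncode) ++
  ([Sum.inr (Sum.inr 0)] ++ (atF (m+3) (m+1) m).listEncode) ++
  ([Sum.inr (Sum.inr 0)] ++ (atF (m+3) (m+1) (m+2)).listEncode) ++
  ([Sum.inr (Sum.inr 0)] ++ (atF (m+3) (m+2) 1).listEncode) ++
  ([Sum.inr (Sum.inr 0)] ++ (atF (m+3) (m+2) (m+3)).listEncode) ++
  ([Sum.inr (Sum.inr 0)] ++ (atF (m+3) (m+3) 0).listEncode)

theorem listEncode_nc (k : ℕ) : ∀ m, (nc k m).listEncode =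
    (List.range k).flatMap (fun j => blk (m + 3 * j)) ++ (nc 0 (m + 3 * k)).listEncode := by
  induction k with
  | zero => intro m; rfl
  | succ k ih =>
    intro m
    rw [List.range_succ_eq_map, List.flatMap_cons, List.flatMap_map]
    have h1 : (nc (k+1) m).listEncode = blk m ++ (nc k (m+3)).listEncode := by
      conv_lhs => rw [nc]
      simp [BoundedFormula.listEncode, blk]
    rw [h1, ih, List.append_assoc]
    have e : ∀ j, m + 3 + 3 * j = m + 3 * Nat.succ j := fun j => by omega
    simp only [e]
    simp only [mul_zero, add_zero, List.append_cancel_left_eq]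
    rw [e k]

theorem encode_vt (n i : ℕ) : Encodable.encode (vt n i) =
    Nat.succ (Nat.pair (2 * (2 * (i % (n + 1)) + 1)) 0) := rfl

theorem primrec_sym_vt {f g : ℕ → ℕ} (hf : Primrec f) (hg : Primrec g) :
    Primrec fun m => Encodable.encode (Sum.inl ⟨f m + 1, vt (f m) (g m)⟩ : Sy) := by
  have : ∀ m, Encodable.encode (Sum.inl ⟨f m + 1, vt (f m) (g m)⟩ : Sy) =
    2 * Nat.pair (f m + 1) (Nat.succ (Nat.pair (2 * (2 * (g m % (f m + 1)) + 1)) 0)) :=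
    fun m => rfl
  simp only [this]
  have h1 : Primrec fun m => f m + 1 := Primrec.succ.comp hf
  refine Primrec.nat_mul.comp (Primrec.const 2) (Primrec₂.natPair.comp h1 (Primrec.succ.comp
    (Primrec₂.natPair.comp (Primrec.nat_mul.comp (Primrec.const 2) (Primrec.succ.comp
      (Primrec.nat_mul.comp (Primrec.const 2) (Primrec.nat_mod.comp hg h1)))) (Primrec.const 0))))

theorem primrec_sym_nat {f : ℕ → ℕ} (hf : Primrec f) :
    Primrec fun m => Encodable.encode (Sum.inr (Sum.inr (f m)) : Sy) := by
  have : ∀ m, Encodable.encode (Sum.inr (Sum.inr (f m)) : Sy) = 2 * (2 * f m + 1) + 1 :=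
    fun m => rfl
  simp only [this]
  exact Primrec.succ.comp (Primrec.nat_mul.comp (Primrec.const 2) (Primrec.succ.comp
      (Primrec.nat_mul.comp (Primrec.const 2) hf)))

theorem primrec_atF {f g h : ℕ → ℕ} (hf : Primrec f) (hg : Primrec g) (hh : Primrec h) :
    Primrec fun m => ((atF (f m) (g m) (h m)).listEncode).map Encodable.encode := by
  have : ∀ m, ((atF (f m) (g m) (h m)).listEncode).map Encodable.encode =
    [Encodable.encode (Sum.inr (Sum.inl ⟨2, Language.adj⟩) : Sy),
     Encodable.encode (Sum.inr (Sum.inr (f m + 1)) : Sy),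
     Encodable.encode (Sum.inl ⟨f m + 1, vt (f m) (g m)⟩ : Sy),
     Encodable.encode (Sum.inl ⟨f m + 1, vt (f m) (h m)⟩ : Sy)] := fun m => rfl
  simp only [this]
  refine Primrec.list_cons.comp (Primrec.const _) (Primrec.list_cons.comp ?_
    (Primrec.list_cons.comp ?_ (Primrec.list_cons.comp ?_ (Primrec.const _))))
  · exact primrec_sym_nat (Primrec.succ.comp hf)
  · exact primrec_sym_vt hf hg
  · exact primrec_sym_vt hf hh

theorem primrec_nc0 {f : ℕ → ℕ} (hf : Primrec f) :
    Primrec fun m => ((nc 0 (f m)).listEncode).map Encodable.encode := by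
  have : ∀ m, ((nc 0 (f m)).listEncode).map Encodable.encode =
    [Encodable.encode (Sum.inr (Sum.inr 0) : Sy),
     Encodable.encode (Sum.inl ⟨f m + 1, vt (f m) (f m)⟩ : Sy),
     Encodable.encode (Sum.inl ⟨f m + 1, vt (f m) 3⟩ : Sy),
     Encodable.encode (Sum.inr (Sum.inr (f m + 1 + 2)) : Sy)] := fun m => rfl
  simp only [this]
  refine Primrec.list_cons.comp (Primrec.const _) (Primrec.list_cons.comp ?_
    (Primrec.list_cons.comp ?_ (Primrec.list_cons.comp ?_ (Primrec.const _))))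
  · exact primrec_sym_vt hf hf
  · exact primrec_sym_vt hf (Primrec.const 3)
  · exact primrec_sym_nat (Primrec.succ.comp (Primrec.succ.comp (Primrec.succ.comp hf)))

theorem primrec_blk {f : ℕ → ℕ} (hf : Primrec f) :
    Primrec fun m => (blk (f m)).map Encodable.encode := by
  unfold blk
  simp only [List.map_append]
  have h1 : Primrec fun m => f m + 1 := Primrec.succ.comp hf
  have h2 : Primrec fun m => f m + 2 := Primrec.succ.comp h1
  have h3 : Primrec fun m => f m + 3 := Primrec.succ.comp h2
  refine Primrec.list_append.comp (Primrec.list_append.comp (Primrec.list_append.comp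
    (Primrec.list_append.comp (Primrec.list_append.comp (Primrec.list_append.comp
    (Primrec.const _) ?_) ?_) ?_) ?_) ?_) ?_ <;>
    refine Primrec.list_append.comp (Primrec.const _) ?_
  · exact primrec_atF h3 h1 (Primrec.const 5)
  · exact primrec_atF h3 h1 hf
  · exact primrec_atF h3 h1 h2
  · exact primrec_atF h3 h2 (Primrec.const 1)
  · exact primrec_atF h3 h2 h3
  · exact primrec_atF h3 h3 (Primrec.const 0)

theorem primrec_code (m0 : ℕ) (pre suf : List Sy) :
    Primrec fun k => Encodable.encode (pre ++ (nc k m0).listEncode ++ suf) := by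
  have h : Primrec fun k => (pre ++ (nc k m0).listEncode ++ suf).map Encodable.encode := by
    simp only [List.map_append]
    refine Primrec.list_append.comp (Primrec.list_append.comp (Primrec.const _) ?_)
      (Primrec.const _)
    have : ∀ k, ((nc k m0).listEncode).map Encodable.encode =
      (List.range k).flatMap (fun j => (blk (m0 + 3 * j)).map Encodable.encode) ++
        ((nc 0 (m0 + 3 * k)).listEncode).map Encodable.encode := by
      intro k
      rw [listEncode_nc, List.map_append, List.map_flatMap]
    simp only [this]
    have hl : Primrec fun k : ℕ => m0 + 3 * k :=
      Primrec.nat_add.comp (Primrec.const _) (Primrec.nat_mul.comp (Primrec.const 3) Primrec.id)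
    refine Primrec.list_append.comp ?_ (primrec_nc0 hl)
    exact Primrec.list_flatMap Primrec.list_range ((primrec_blk hl).comp Primrec.snd).to₂
  refine (Primrec.encode.comp h).of_eq fun k => ?_
  rw [← encode_list_map]

end Enc

section Gr
open Nat.Partrec (Code)

inductive HT (M N : ℕ) : Type
  | par (i : Fin (8 + M)) : HT M N
  | num (n : Fin (N + 1)) : HT M N
  | port (n : Fin (N + 1)) : HT M N
  | tup (e : Fin (4 + M)) (x y : Fin (N + 1)) : HT M N

instance (M N : ℕ) : Finite (HT M N) := by
  let f : HT M N → Fin (8 + M) ⊕ Fin (N + 1) ⊕ Fin (N + 1) ⊕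
      (Fin (4 + M) × Fin (N + 1) × Fin (N + 1)) := fun a => match a with
    | .par i => Sum.inl i
    | .num n => Sum.inr (Sum.inl n)
    | .port n => Sum.inr (Sum.inr (Sum.inl n))
    | .tup e x y => Sum.inr (Sum.inr (Sum.inr (e, x, y)))
  refine Finite.of_injective f ?_
  intro a b h
  cases a <;> cases b <;> simp_all [f]

/-- Oriented edges of the concrete graph. -/
def E0 (M N : ℕ) : HT M N → HT M N → Prop
  | .num _, .par i => i.val = 0
  | .port _, .par i => i.val = 1
  | .num n, .port m => n = m
  | .tup _ x _, .num n => n = x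
  | .tup _ _ y, .port n => n = y
  | .tup e x y, .par i => i.val = 4 + e.val ∧ R0 N e.val x.val y.val
  | _, _ => False

def HAdj (M N : ℕ) (a b : HT M N) : Prop := E0 M N a b ∨ E0 M N b a

theorem HAdj_symm (M N : ℕ) (a b : HT M N) : HAdj M N a b ↔ HAdj M N b a := or_comm

theorem HAdj_irrefl (M N : ℕ) (a : HT M N) : ¬ HAdj M N a a := by
  cases a <;> simp [HAdj, E0]

theorem HAdj_par0 (M N : ℕ) (i : Fin (8 + M)) (hi : i.val = 0) (b : HT M N) :
    HAdj M N b (.par i) ↔ ∃ n, b = .num n := by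
  cases b <;> simp [HAdj, E0, hi]
  omega

theorem HAdj_par1 (M N : ℕ) (i : Fin (8 + M)) (hi : i.val = 1) (b : HT M N) :
    HAdj M N b (.par i) ↔ ∃ n, b = .port n := by
  cases b <;> simp [HAdj, E0, hi]
  omega

theorem HAdj_par4 (M N : ℕ) (i : Fin (8 + M)) (e : Fin (4 + M)) (hi : i.val = 4 + e.val)
    (b : HT M N) :
    HAdj M N b (.par i) ↔ ∃ x y, b = .tup e x y ∧ R0 N e.val x.val y.val := by
  cases b with
  | tup e' x y =>
    simp only [HAdj, E0, hi, or_false, HT.tup.injEq]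
    constructor
    · rintro ⟨h, h'⟩
      have : e' = e := Fin.ext (by omega)
      subst this
      exact ⟨x, y, ⟨rfl, rfl, rfl⟩, h'⟩
    · rintro ⟨x', y', ⟨rfl, rfl, rfl⟩, h'⟩
      exact ⟨rfl, h'⟩
  | _ => simp [HAdj, E0, hi] <;> omega

theorem realize_H {V : Type} (adj : V → V → Prop) (M N : ℕ) (ι : HT M N → V)
    (hcl : ∀ a v, adj v (ι a) → ∃ b, v = ι b)
    (hadj : ∀ a b, adj (ι a) (ι b) ↔ HAdj M N a b)
    (c : Code) (hc : c.encodeCode < M) (k y : ℕ) (hk : k ≤ N) (hy : y ≤ N) (hev : BEv N c k y) :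
    ∃ w : Fin (8 + M + 1) → V, Phi adj (ext (8 + M) w) M c ∧
          Ch adj (ext (8 + M) w) k (ext (8 + M) w (8 + M)) := by
  classical
  let nu : ℕ → V := fun n => ι (.num (Fin.ofNat (N + 1) n))
  let w : Fin (8 + M + 1) → V := fun i =>
    if h : i.val = 8 + M then nu 0 else if i.val = 3 then nu k else ι (.par ⟨i.val, by omega⟩)
  refine ⟨w, ?_⟩
  obtain ⟨g, hg⟩ : ∃ g, g = ext (8 + M) w := ⟨_, rfl⟩
  rw [← hg]
  have hgz : g (8 + M) = nu 0 := by
    rw [hg]; simp [ext, w]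
  have hg3 : g 3 = nu k := by
    rw [hg]; simp only [ext, w, Fin.val_ofNat]
    have : 3 % (8 + M + 1) = 3 := Nat.mod_eq_of_lt (by omega)
    simp only [this]
    rw [dif_neg (by omega), if_pos trivial]
  have hgp : ∀ i (h : i < 8 + M), i ≠ 3 → g i = ι (.par ⟨i, h⟩) := by
    intro i h h3
    rw [hg]; simp only [ext, w, Fin.val_ofNat]
    have : i % (8 + M + 1) = i := Nat.mod_eq_of_lt (by omega)
    simp only [this]
    rw [dif_neg (by omega), if_neg h3]
  have hD : ∀ v, DG adj g v ↔ ∃ n ≤ N, v = nu n := by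
    intro v
    rw [DG, hgp 0 (by omega) (by omega)]
    constructor
    · intro h
      obtain ⟨b, rfl⟩ := hcl _ _ h
      rw [hadj, HAdj_par0 _ _ _ rfl] at h
      obtain ⟨n, rfl⟩ := h
      exact ⟨n.val, by omega, by simp [nu]⟩
    · rintro ⟨n, hn, rfl⟩
      rw [hadj, HAdj_par0 _ _ _ rfl]
      exact ⟨_, rfl⟩
  have hR : ∀ e < 4 + M, ∀ x ≤ N, ∀ y ≤ N, (RG adj g e (nu x) (nu y) ↔ R0 N e x y) := by
    intro e he x hx y hy
    have hxo : (Fin.ofNat (N + 1) x).val = x := Nat.mod_eq_of_lt (by omega)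
    have hyo : (Fin.ofNat (N + 1) y).val = y := Nat.mod_eq_of_lt (by omega)
    rw [RG, hgp 1 (by omega) (by omega), hgp (4 + e) (by omega) (by omega)]
    constructor
    · rintro ⟨t, a, h1, h2, h3, h4, h5⟩
      obtain ⟨T, rfl⟩ := hcl _ _ h1
      obtain ⟨A, rfl⟩ := hcl _ _ h4
      rw [hadj] at h1 h2 h3 h4 h5
      rw [HAdj_par4 _ _ _ ⟨e, he⟩ rfl] at h1
      rw [HAdj_par1 _ _ _ rfl] at h4
      obtain ⟨x', y', rfl, hr⟩ := h1
      obtain ⟨m, rfl⟩ := h4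
      simp only [HAdj, E0, or_false, false_or] at h2 h3 h5
      subst h3
      rw [← h2, ← h5, hxo, hyo] at hr
      exact hr
    · intro hr
      refine ⟨ι (.tup ⟨e, he⟩ (Fin.ofNat (N + 1) x) (Fin.ofNat (N + 1) y)),
        ι (.port (Fin.ofNat (N + 1) y)), ?_⟩
      simp only [nu]
      rw [hadj, hadj, hadj, hadj, hadj, HAdj_par4 _ _ _ ⟨e, he⟩ rfl, HAdj_par1 _ _ _ rfl]
      refine ⟨⟨_, _, rfl, ?_⟩, ?_, ?_, ⟨_, rfl⟩, ?_⟩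
      · rw [hxo, hyo]; exact hr
      · simp [HAdj, E0]
      · simp [HAdj, E0]
      · simp [HAdj, E0]
  obtain ⟨h1, h2, h3, h4⟩ := complete (DG adj g) (RG adj g) N M nu hD hR
  refine ⟨⟨h1, h2, h3, ?_, ?_, ?_, nu y, ?_, ?_⟩, ?_⟩
  · rw [hgz, hD]; exact ⟨0, by omega, rfl⟩
  · rw [hgz]; exact h4
  · rw [hg3, hD]; exact ⟨k, hk, rfl⟩
  · rw [hD]; exact ⟨y, hy, rfl⟩
  · rw [TT, hg3, hR _ (by omega) _ hk _ hy, Nat.add_comm]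
    have e : Code.ofNatCode c.encodeCode = c := Denumerable.ofNat_encode c
    simp only [R0, e]
    exact hev
  · have : ∀ j ≤ k, Ch adj g j (nu (k - j)) := by
      intro j
      induction j with
      | zero => intro _; exact hg3.symm
      | succ j ih =>
        intro hj
        have hr : RG adj g 1 (nu (k - (j + 1))) (nu (k - j)) := by
          rw [hR 1 (by omega) _ (by omega) _ (by omega)]
          show k - j = k - (j + 1) + 1
          omega
        obtain ⟨t, a, q1, q2, q3, q4, q5⟩ := hr
        exact ⟨t, a, nu (k - j), q1, q2, q3, q4, q5, (hD _).2 ⟨k - j, by omega, rfl⟩,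
          ih (by omega)⟩
    have := this k le_rfl
    rw [Nat.sub_self] at this
    rw [hgz]
    exact this

end Gr

section Prob

/-- Length of an edge. -/
def dist {n : ℕ} (e : EdgeIdx n) : ℕ := e.1.2.val - e.1.1.val

noncomputable def wt (p : ℕ → ℝ) {n : ℕ} (e : EdgeIdx n) (b : Bool) : ℝ :=
  if b then p (dist e) else 1 - p (dist e)

theorem sampleWeight_eq (p : ℕ → ℝ) {n : ℕ} (ω : Sample n) :
    sampleWeight p ω = ∏ e, wt p e (ω e) := rfl

theorem wt_pos {p : ℕ → ℝ} (hp : ∀ i, 0 < p i ∧ p i < 1) {n : ℕ} (e : EdgeIdx n) (b : Bool) :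
    0 < wt p e b := by
  unfold wt
  have := hp (dist e)
  split_ifs <;> linarith

theorem wt_le_one {p : ℕ → ℝ} (hp : ∀ i, 0 < p i ∧ p i < 1) {n : ℕ} (e : EdgeIdx n) (b : Bool) :
    wt p e b ≤ 1 := by
  unfold wt
  have := hp (dist e)
  split_ifs <;> linarith

theorem sampleWeight_nonneg {p : ℕ → ℝ} (hp : ∀ i, 0 < p i ∧ p i < 1) {n : ℕ} (ω : Sample n) :
    0 ≤ sampleWeight p ω := by
  rw [sampleWeight_eq]
  exact Finset.prod_nonneg fun e _ => (wt_pos hp e _).le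

theorem Pr_cyl (p : ℕ → ℝ) {n : ℕ} (s : Finset (EdgeIdx n)) (f : EdgeIdx n → Bool) :
    Pr p n (fun ω => ∀ e ∈ s, ω e = f e) = ∏ e ∈ s, wt p e (f e) := by
  classical
  unfold Pr
  have h1 : ∀ ω : Sample n, (if (∀ e ∈ s, ω e = f e) then sampleWeight p ω else 0) =
      ∏ e, (if e ∈ s → ω e = f e then wt p e (ω e) else 0) := by
    intro ω
    split_ifs with h
    · rw [sampleWeight_eq]
      exact Finset.prod_congr rfl fun e _ => (if_pos (h e)).symm
    · push Not at h
      obtain ⟨e, he, hne⟩ := h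
      exact (Finset.prod_eq_zero (Finset.mem_univ e) (if_neg (by simp [he, hne]))).symm
  have h2 : (∑ ω : Sample n, (if (∀ e ∈ s, ω e = f e) then sampleWeight p ω else 0)) =
      ∑ ω : Sample n, ∏ e, (if e ∈ s → ω e = f e then wt p e (ω e) else 0) :=
    Finset.sum_congr rfl fun ω _ => h1 ω
  refine Eq.trans (Finset.sum_congr rfl fun ω _ => by congr) (h2.trans ?_)
  rw [← Fintype.piFinset_univ]
  rw [← Finset.prod_univ_sum (fun _ => (Finset.univ : Finset Bool))
    (fun e b => if e ∈ s → b = f e then wt p e b else 0)]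
  rw [← Finset.prod_subset (Finset.subset_univ s)]
  · refine Finset.prod_congr rfl fun e he => ?_
    cases hfe : f e <;> simp [he]
  · intro e _ he
    simp [he, wt]

theorem Pr_true (p : ℕ → ℝ) (n : ℕ) : Pr p n (fun _ => True) = 1 := by
  have := Pr_cyl p (n := n) ∅ (fun _ => true)
  simpa using this

theorem Pr_mono {p : ℕ → ℝ} (hp : ∀ i, 0 < p i ∧ p i < 1) {n : ℕ} {P Q : Sample n → Prop}
    (h : ∀ ω, P ω → Q ω) : Pr p n P ≤ Pr p n Q := by
  unfold Pr
  refine Finset.sum_le_sum fun ω _ => ?_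
  have := sampleWeight_nonneg hp ω
  by_cases h1 : P ω
  · simp [h1, h ω h1]
  · simp only [h1, if_false]
    split_ifs <;> simp [this]

theorem Pr_nonneg {p : ℕ → ℝ} (hp : ∀ i, 0 < p i ∧ p i < 1) {n : ℕ} (P : Sample n → Prop) :
    0 ≤ Pr p n P := by
  unfold Pr
  refine Finset.sum_nonneg fun ω _ => ?_
  have := sampleWeight_nonneg hp ω
  split_ifs <;> simp [this]

theorem Pr_not (p : ℕ → ℝ) {n : ℕ} (P : Sample n → Prop) :
    Pr p n P + Pr p n (fun ω => ¬ P ω) = 1 := by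
  rw [← Pr_true p n]
  unfold Pr
  rw [← Finset.sum_add_distrib]
  refine Finset.sum_congr rfl fun ω _ => ?_
  by_cases h : P ω <;> simp [h]

/-- Second moment method. -/
theorem second_moment {p : ℕ → ℝ} (hp : ∀ i, 0 < p i ∧ p i < 1) {n : ℕ} (J : ℕ)
    (A : ℕ → Sample n → Prop) :
    Pr p n (fun ω => ∀ i < J, ¬ A i ω) * (∑ i ∈ Finset.range J, Pr p n (A i)) ^ 2 ≤
      ∑ i ∈ Finset.range J, ∑ j ∈ Finset.range J,
        (Pr p n (fun ω => A i ω ∧ A j ω) - Pr p n (A i) * Pr p n (A j)) := by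
  classical
  set μ := ∑ i ∈ Finset.range J, Pr p n (A i) with hμ
  let X : Sample n → ℝ := fun ω => ∑ i ∈ Finset.range J, if A i ω then 1 else 0
  have hPr : ∀ P : Sample n → Prop, Pr p n P = ∑ ω, sampleWeight p ω * (if P ω then 1 else 0) := by
    intro P
    unfold Pr
    refine Finset.sum_congr rfl fun ω _ => ?_
    by_cases h : P ω <;> simp [h]
  have h0 : ∑ ω : Sample n, sampleWeight p ω = 1 := by
    have := Pr_true p n
    rw [hPr] at this
    simpa using this
  have h1 : ∑ ω : Sample n, sampleWeight p ω * X ω = μ := by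
    simp only [X, Finset.mul_sum]
    rw [Finset.sum_comm, hμ]
    exact Finset.sum_congr rfl fun i _ => (hPr _).symm
  have h2 : ∑ ω : Sample n, sampleWeight p ω * (X ω * X ω) =
      ∑ i ∈ Finset.range J, ∑ j ∈ Finset.range J, Pr p n (fun ω => A i ω ∧ A j ω) := by
    simp only [X, Finset.sum_mul_sum]
    simp only [Finset.mul_sum]
    rw [Finset.sum_comm]
    refine Finset.sum_congr rfl fun i _ => ?_
    rw [Finset.sum_comm]
    refine Finset.sum_congr rfl fun j _ => ?_
    rw [hPr]
    refine Finset.sum_congr rfl fun ω _ => ?_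
    by_cases h : A i ω <;> by_cases h' : A j ω <;> simp [h, h']
  have h3 : ∑ i ∈ Finset.range J, ∑ j ∈ Finset.range J,
        (Pr p n (fun ω => A i ω ∧ A j ω) - Pr p n (A i) * Pr p n (A j)) =
      ∑ ω : Sample n, sampleWeight p ω * (X ω - μ) ^ 2 := by
    simp only [Finset.sum_sub_distrib]
    rw [← h2, ← Finset.sum_mul_sum, ← hμ]
    have : ∀ ω : Sample n, sampleWeight p ω * (X ω - μ) ^ 2 =
      sampleWeight p ω * (X ω * X ω) - 2 * μ * (sampleWeight p ω * X ω) + μ * μ * sampleWeight p ω :=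
      fun ω => by ring
    simp only [this]
    rw [Finset.sum_add_distrib, Finset.sum_sub_distrib, ← Finset.mul_sum, ← Finset.mul_sum, h0, h1]
    ring
  rw [h3, hPr, Finset.sum_mul]
  refine Finset.sum_le_sum fun ω _ => ?_
  rw [mul_assoc]
  refine mul_le_mul_of_nonneg_left ?_ (sampleWeight_nonneg hp ω)
  by_cases h : ∀ i < J, ¬ A i ω
  · rw [if_pos h]
    have : X ω = 0 := Finset.sum_eq_zero fun i hi => if_neg (h i (Finset.mem_range.1 hi))
    rw [this]
    nlinarith
  · rw [if_neg h, zero_mul]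
    positivity

end Prob

section Blk

/-- Edges touching block `i` of size `h`. -/
def tb (n h i : ℕ) : Finset (EdgeIdx n) :=
  Finset.univ.filter fun e => e.1.1.val / h = i ∨ e.1.2.val / h = i

theorem dist_mem {n : ℕ} (e : EdgeIdx n) : dist e ∈ Finset.Icc 1 n := by
  have h1 : e.1.1.val < e.1.2.val := e.2
  have h2 := e.1.2.isLt
  rw [Finset.mem_Icc]
  unfold dist
  omega

theorem sum_inj {n h : ℕ} (G : ℕ → ℝ) (hG : ∀ d, 0 ≤ G d) (F : Finset (EdgeIdx n))
    (hh : 0 < h) (φ : EdgeIdx n → ℕ) (hφ : ∀ e ∈ F, ∀ e' ∈ F, φ e % h = φ e' % h →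
      dist e = dist e' → e = e') :
    ∑ e ∈ F, G (dist e) ≤ h * ∑ d ∈ Finset.Icc 1 n, G d := by
  classical
  let ψ : EdgeIdx n → ℕ × ℕ := fun e => (φ e % h, dist e)
  have h1 : ∑ e ∈ F, G (dist e) = ∑ x ∈ F.image ψ, G x.2 := by
    rw [Finset.sum_image]
    intro e he e' he' hee
    simp only [ψ, Prod.mk.injEq] at hee
    exact hφ e he e' he' hee.1 hee.2
  have h2 : ∑ x ∈ Finset.range h ×ˢ Finset.Icc 1 n, G x.2 = h * ∑ d ∈ Finset.Icc 1 n, G d := by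
    rw [Finset.sum_product]
    simp
  rw [h1, ← h2]
  refine Finset.sum_le_sum_of_subset_of_nonneg ?_ fun x _ _ => hG _
  intro x hx
  obtain ⟨e, he, rfl⟩ := Finset.mem_image.1 hx
  rw [Finset.mem_product]
  exact ⟨Finset.mem_range.2 (Nat.mod_lt _ hh), dist_mem e⟩

theorem sum_tb {n h : ℕ} (i : ℕ) (hh : 0 < h) (G : ℕ → ℝ) (hG : ∀ d, 0 ≤ G d) :
    ∑ e ∈ tb n h i, G (dist e) ≤ 2 * h * ∑ d ∈ Finset.Icc 1 n, G d := by
  classical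
  have h1 := sum_inj G hG (Finset.univ.filter fun e : EdgeIdx n => e.1.1.val / h = i) hh
    (fun e => e.1.1.val) (by
      intro e he e' he' h1 h2
      simp only [Finset.mem_filter, Finset.mem_univ, true_and] at he he'
      have q1 := Nat.div_add_mod e.1.1.val h
      have q2 := Nat.div_add_mod e'.1.1.val h
      rw [he, h1] at q1
      rw [he'] at q2
      have l1 : e.1.1.val < e.1.2.val := e.2
      have l2 : e'.1.1.val < e'.1.2.val := e'.2
      unfold dist at h2
      refine Subtype.ext (Prod.ext (Fin.ext ?_) (Fin.ext ?_)) <;> omega)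
  have h2 := sum_inj G hG (Finset.univ.filter fun e : EdgeIdx n => e.1.2.val / h = i) hh
    (fun e => e.1.2.val) (by
      intro e he e' he' h1 h2
      simp only [Finset.mem_filter, Finset.mem_univ, true_and] at he he'
      have q1 := Nat.div_add_mod e.1.2.val h
      have q2 := Nat.div_add_mod e'.1.2.val h
      rw [he, h1] at q1
      rw [he'] at q2
      have l1 : e.1.1.val < e.1.2.val := e.2
      have l2 : e'.1.1.val < e'.1.2.val := e'.2
      unfold dist at h2
      refine Subtype.ext (Prod.ext (Fin.ext ?_) (Fin.ext ?_)) <;> omega)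
  have h3 := Finset.sum_union_inter (s₁ := Finset.univ.filter fun e : EdgeIdx n => e.1.1.val / h = i)
    (s₂ := Finset.univ.filter fun e : EdgeIdx n => e.1.2.val / h = i)
    (f := fun e => G (dist e))
  have h4 : 0 ≤ ∑ e ∈ (Finset.univ.filter fun e : EdgeIdx n => e.1.1.val / h = i) ∩
      (Finset.univ.filter fun e : EdgeIdx n => e.1.2.val / h = i), G (dist e) :=
    Finset.sum_nonneg fun _ _ => hG _
  have h5 : tb n h i = (Finset.univ.filter fun e : EdgeIdx n => e.1.1.val / h = i) ∪
      (Finset.univ.filter fun e : EdgeIdx n => e.1.2.val / h = i) := by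
    unfold tb
    rw [Finset.filter_or]
  rw [h5]
  linarith

theorem one_sub_prod_le {α : Type} (s : Finset α) (x : α → ℝ) (hx : ∀ a, 0 < x a ∧ x a < 1) :
    1 - ∏ a ∈ s, (1 - x a) ≤ ∑ a ∈ s, x a := by
  classical
  induction s using Finset.induction_on with
  | empty => simp
  | insert a s ha ih =>
    rw [Finset.prod_insert ha, Finset.sum_insert ha]
    have h1 : ∏ a ∈ s, (1 - x a) ≤ 1 :=
      Finset.prod_le_one (fun b _ => by linarith [(hx b).2]) fun b _ => by linarith [(hx b).1]
    nlinarith [hx a]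

theorem block_bound {p : ℕ → ℝ} (hp : ∀ i, 0 < p i ∧ p i < 1) (n h J : ℕ) (hh : 0 < h)
    (f : EdgeIdx n → Bool) (hf : ∀ e, f e = true → e.1.1.val / h = e.1.2.val / h) :
    Pr p n (fun ω => ∀ i < J, ¬ ∀ e ∈ tb n h i, ω e = f e) * (J *
      Real.exp (- (2 * h * (∑ d ∈ Finset.Icc 1 n, (- Real.log (1 - p d)) +
        h * ∑ d ∈ Finset.range h, (- Real.log (p d)))))) ≤
      Real.exp (4 * h * ∑ d ∈ Finset.Icc 1 n, (- Real.log (1 - p d))) := by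
  classical
  set L := ∑ d ∈ Finset.Icc 1 n, (- Real.log (1 - p d)) with hL
  set K := ∑ d ∈ Finset.range h, (- Real.log (p d)) with hK
  have hlp : ∀ d, 0 ≤ - Real.log (p d) := fun d => by
    have := Real.log_nonpos (hp d).1.le (hp d).2.le
    linarith
  have hlq : ∀ d, p d ≤ - Real.log (1 - p d) := fun d => by
    have := Real.log_le_sub_one_of_pos (show 0 < 1 - p d by linarith [(hp d).2])
    linarith
  have hlq0 : ∀ d, 0 ≤ - Real.log (1 - p d) := fun d => (hp d).1.le.trans (hlq d)
  have hK0 : 0 ≤ K := Finset.sum_nonneg fun d _ => hlp d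
  have hL0 : 0 ≤ L := Finset.sum_nonneg fun d _ => hlq0 d
  let A : ℕ → Sample n → Prop := fun i ω => ∀ e ∈ tb n h i, ω e = f e
  let a : ℕ → ℝ := fun i => ∏ e ∈ tb n h i, wt p e (f e)
  have ha : ∀ i, Pr p n (A i) = a i := fun i => Pr_cyl p _ _
  have ha0 : ∀ i, 0 < a i := fun i => Finset.prod_pos fun e _ => wt_pos hp e _
  have hab : ∀ i, Real.exp (- (2 * h * (L + h * K))) ≤ a i := by
    intro i
    let G : ℕ → ℝ := fun d => - Real.log (1 - p d) + if d < h then K else 0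
    have hG : ∀ d, 0 ≤ G d := fun d => by
      have := hlq0 d
      simp only [G]
      split_ifs <;> linarith
    have h1 := sum_tb (n := n) i hh G hG
    have h2 : ∑ d ∈ Finset.Icc 1 n, G d ≤ L + h * K := by
      simp only [G, Finset.sum_add_distrib]
      rw [← hL]
      have : ∑ d ∈ Finset.Icc 1 n, (if d < h then K else 0) ≤ h * K := by
        rw [← Finset.sum_filter, Finset.sum_const, nsmul_eq_mul]
        refine mul_le_mul_of_nonneg_right ?_ hK0
        have : ((Finset.Icc 1 n).filter (· < h)).card ≤ (Finset.range h).card :=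
          Finset.card_le_card fun x hx => by
            simp only [Finset.mem_filter] at hx
            exact Finset.mem_range.2 hx.2
        rw [Finset.card_range] at this
        exact_mod_cast this
      linarith
    have h3 : Real.log (a i) = ∑ e ∈ tb n h i, Real.log (wt p e (f e)) :=
      Real.log_prod fun e _ => (wt_pos hp e _).ne'
    have h4 : - ∑ e ∈ tb n h i, G (dist e) ≤ Real.log (a i) := by
      rw [h3, ← Finset.sum_neg_distrib]
      refine Finset.sum_le_sum fun e _ => ?_
      simp only [G, wt]
      by_cases hfe : f e = true
      · rw [if_pos hfe]
        have hd : dist e < h := by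
          have := hf e hfe
          have q1 := Nat.div_add_mod e.1.1.val h
          have q2 := Nat.div_add_mod e.1.2.val h
          rw [this] at q1
          have q3 := Nat.mod_lt e.1.2.val hh
          unfold dist
          omega
        rw [if_pos hd]
        have := Finset.single_le_sum (f := fun d => - Real.log (p d)) (fun d _ => hlp d)
          (Finset.mem_range.2 hd)
        have h7 := hlq0 (dist e)
        rw [← hK] at this
        linarith
      · rw [if_neg hfe]
        split_ifs <;> linarith
    rw [← Real.le_log_iff_exp_le (ha0 i)]
    refine le_trans ?_ h4
    have : 2 * (h:ℝ) * ∑ d ∈ Finset.Icc 1 n, G d ≤ 2 * h * (L + h * K) :=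
      mul_le_mul_of_nonneg_left h2 (by positivity)
    linarith
  have hsm := second_moment hp J A
  have hpair : ∀ i j, i ≠ j → Pr p n (fun ω => A i ω ∧ A j ω) - Pr p n (A i) * Pr p n (A j) ≤
      a i * ∑ e ∈ tb n h i ∩ tb n h j, p (dist e) := by
    intro i j hij
    have h1 : Pr p n (fun ω => A i ω ∧ A j ω) = ∏ e ∈ tb n h i ∪ tb n h j, wt p e (f e) := by
      rw [← Pr_cyl]
      congr 1
      funext ω
      refine propext ⟨fun ⟨q1, q2⟩ e he => (Finset.mem_union.1 he).elim (q1 e) (q2 e),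
        fun q => ⟨fun e he => q e (Finset.mem_union_left _ he),
          fun e he => q e (Finset.mem_union_right _ he)⟩⟩
    have h2 := Finset.prod_union_inter (s₁ := tb n h i) (s₂ := tb n h j)
      (f := fun e => wt p e (f e))
    have h3 : ∏ e ∈ tb n h i ∩ tb n h j, wt p e (f e) =
        ∏ e ∈ tb n h i ∩ tb n h j, (1 - p (dist e)) := by
      refine Finset.prod_congr rfl fun e he => ?_
      have hfe : ¬ f e = true := by
        intro hfe
        have := hf e hfe
        simp only [Finset.mem_inter, tb, Finset.mem_filter, Finset.mem_univ, true_and] at he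
        omega
      rw [wt, if_neg hfe]
    have h4 : ∏ e ∈ tb n h i ∪ tb n h j, wt p e (f e) ≤ a i := by
      rw [← Finset.prod_sdiff (Finset.subset_union_left (s₁ := tb n h i) (s₂ := tb n h j))]
      exact mul_le_of_le_one_left (ha0 i).le
        (Finset.prod_le_one (fun e _ => (wt_pos hp e _).le) fun e _ => wt_le_one hp e _)
    have h5 := one_sub_prod_le (tb n h i ∩ tb n h j) (fun e => p (dist e)) (fun e => hp _)
    have h6 : 0 ≤ ∏ e ∈ tb n h i ∪ tb n h j, wt p e (f e) :=
      Finset.prod_nonneg fun e _ => (wt_pos hp e _).le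
    have h7 : 0 ≤ ∑ e ∈ tb n h i ∩ tb n h j, p (dist e) :=
      Finset.sum_nonneg fun e _ => (hp _).1.le
    rw [ha, ha, h1]
    change _ - (∏ e ∈ tb n h i, wt p e (f e)) * (∏ e ∈ tb n h j, wt p e (f e)) ≤ _
    rw [← h2, h3]
    calc _ = (∏ e ∈ tb n h i ∪ tb n h j, wt p e (f e)) *
          (1 - ∏ e ∈ tb n h i ∩ tb n h j, (1 - p (dist e))) := by ring
      _ ≤ (∏ e ∈ tb n h i ∪ tb n h j, wt p e (f e)) *
          ∑ e ∈ tb n h i ∩ tb n h j, p (dist e) := mul_le_mul_of_nonneg_left h5 h6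
      _ ≤ _ := mul_le_mul_of_nonneg_right h4 h7
  have hrow : ∀ i ∈ Finset.range J, ∑ j ∈ Finset.range J,
      (Pr p n (fun ω => A i ω ∧ A j ω) - Pr p n (A i) * Pr p n (A j)) ≤ a i * (1 + 4 * h * L) := by
    intro i hi
    have h1 : ∀ j ∈ Finset.range J, (Pr p n (fun ω => A i ω ∧ A j ω) - Pr p n (A i) * Pr p n (A j)) ≤
        (if j = i then a i else 0) + a i * ∑ e ∈ tb n h i, (if e ∈ tb n h j then p (dist e) else 0) := by
      intro j _
      rw [← Finset.sum_filter, Finset.filter_mem_eq_inter]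
      have h7 : 0 ≤ ∑ e ∈ tb n h i ∩ tb n h j, p (dist e) :=
        Finset.sum_nonneg fun e _ => (hp _).1.le
      by_cases hij : j = i
      · subst hij
        rw [if_pos rfl]
        have h8 : Pr p n (fun ω => A j ω ∧ A j ω) = a j := by
          rw [← ha]; simp only [and_self]
        rw [h8, ha]
        have := ha0 j
        have h9 : 0 ≤ a j * ∑ e ∈ tb n h j ∩ tb n h j, p (dist e) := by positivity
        nlinarith
      · rw [if_neg hij, zero_add]
        exact hpair i j (Ne.symm hij)
    refine (Finset.sum_le_sum h1).trans ?_
    rw [Finset.sum_add_distrib, Finset.sum_ite_eq' , if_pos hi, ← Finset.mul_sum, Finset.sum_comm]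
    have h2 : ∀ e ∈ tb n h i, ∑ j ∈ Finset.range J, (if e ∈ tb n h j then p (dist e) else 0) ≤
        2 * (- Real.log (1 - p (dist e))) := by
      intro e _
      rw [← Finset.sum_filter, Finset.sum_const, nsmul_eq_mul]
      have h3 : ((Finset.range J).filter fun j => e ∈ tb n h j).card ≤ 2 := by
        refine (Finset.card_le_card (t := {e.1.1.val / h, e.1.2.val / h}) ?_).trans
          Finset.card_le_two
        intro j hj
        simp only [tb, Finset.mem_filter, Finset.mem_univ, true_and] at hj
        simp only [Finset.mem_insert, Finset.mem_singleton]
        omega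
      have h4 : (((Finset.range J).filter fun j => e ∈ tb n h j).card : ℝ) ≤ 2 := by
        exact_mod_cast h3
      have := hlq (dist e)
      have := (hp (dist e)).1
      nlinarith
    have h3 := Finset.sum_le_sum h2
    rw [← Finset.mul_sum] at h3
    have h4 := sum_tb (n := n) i hh (fun d => - Real.log (1 - p d)) hlq0
    rw [← hL] at h4
    have := ha0 i
    nlinarith
  have hS : ∑ i ∈ Finset.range J, Pr p n (A i) = ∑ i ∈ Finset.range J, a i :=
    Finset.sum_congr rfl fun i _ => ha i
  have htot := hsm.trans (Finset.sum_le_sum hrow)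
  rw [hS, ← Finset.sum_mul] at htot
  set Sg := ∑ i ∈ Finset.range J, a i with hSg
  have hSJ : J * Real.exp (- (2 * h * (L + h * K))) ≤ Sg := by
    have := Finset.sum_le_sum (s := Finset.range J) fun i _ => hab i
    simpa using this
  have hX0 : 0 ≤ Pr p n (fun ω => ∀ i < J, ¬ A i ω) := Pr_nonneg hp _
  refine (mul_le_mul_of_nonneg_left hSJ hX0).trans ?_
  rcases Nat.eq_zero_or_pos J with hJ | hJ
  · have : Sg = 0 := by rw [hSg, hJ]; simp
    rw [this, mul_zero]
    positivity
  · have hpos : 0 < Sg := lt_of_lt_of_le (by positivity) hSJ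
    have : Pr p n (fun ω => ∀ i < J, ¬ A i ω) * Sg ≤ 1 + 4 * h * L := by
      have : Sg * (Pr p n (fun ω => ∀ i < J, ¬ A i ω) * Sg) ≤ Sg * (1 + 4 * h * L) := by
        nlinarith
      exact le_of_mul_le_mul_left this hpos
    refine this.trans ?_
    have := Real.add_one_le_exp (4 * h * L)
    linarith

end Blk

section Lim

theorem none_bound {p : ℕ → ℝ} (hp : ∀ i, 0 < p i ∧ p i < 1)
    (hlog : Tendsto
      (fun n : ℕ => Real.log (∏ i ∈ Finset.Icc 1 n, (1 - p i)) / Real.log n) atTop (nhds 0))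
    (h : ℕ) (hh : 0 < h) :
    ∃ C : ℝ, ∀ᶠ n : ℕ in atTop, ∀ (f : EdgeIdx n → Bool),
      (∀ e, f e = true → e.1.1.val / h = e.1.2.val / h) →
      Pr p n (fun ω => ∀ i < n / h, ¬ ∀ e ∈ tb n h i, ω e = f e) ≤ C / Real.sqrt n := by
  set K := ∑ d ∈ Finset.range h, (- Real.log (p d)) with hK
  refine ⟨2 * h * Real.exp (2 * h * (h * K)), ?_⟩
  have hε : (0:ℝ) < 1 / (12 * h) := by positivity
  have h1 := hlog.eventually (Metric.ball_mem_nhds 0 hε)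
  filter_upwards [h1, eventually_ge_atTop (2 * h + 3)] with n hn hn3 f hf
  have hb := block_bound hp n h (n / h) hh f hf
  rw [← hK] at hb
  have hlg : Real.log (∏ i ∈ Finset.Icc 1 n, (1 - p i)) =
      ∑ i ∈ Finset.Icc 1 n, Real.log (1 - p i) :=
    Real.log_prod fun i _ => by linarith [(hp i).2]
  rw [hlg] at hn
  set L := ∑ d ∈ Finset.Icc 1 n, (- Real.log (1 - p d)) with hL
  have hL' : ∑ i ∈ Finset.Icc 1 n, Real.log (1 - p i) = - L := by
    rw [hL, Finset.sum_neg_distrib, neg_neg]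
  rw [hL', _root_.dist_zero_right, Real.norm_eq_abs, abs_lt] at hn
  have hn1 : (1:ℝ) < n := by
    have : 1 < n := by omega
    exact_mod_cast this
  have hlogpos : 0 < Real.log n := Real.log_pos hn1
  have hLb : 6 * h * L ≤ Real.log n / 2 := by
    have := hn.1
    rw [lt_div_iff₀ hlogpos] at this
    have h0 : (0:ℝ) < h := by exact_mod_cast hh
    have h2 : L < 1 / (12 * h) * Real.log n := by linarith
    have h3 : 6 * h * (1 / (12 * h) * Real.log n) = Real.log n / 2 := by
      field_simp; norm_num
    rw [← h3]
    exact mul_le_mul_of_nonneg_left h2.le (by positivity)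
  set P := Pr p n (fun ω => ∀ i < n / h, ¬ ∀ e ∈ tb n h i, ω e = f e) with hP
  have hP0 : 0 ≤ P := Pr_nonneg hp _
  have hsq : 0 < Real.sqrt n := Real.sqrt_pos.2 (by linarith)
  have hexp : Real.exp (Real.log n / 2) = Real.sqrt n := by
    rw [Real.sqrt_eq_rpow, Real.rpow_def_of_pos (by linarith)]
    ring_nf
  have hJ : (n:ℝ) ≤ 2 * h * ((n / h : ℕ) : ℝ) := by
    have q1 := Nat.div_add_mod n h
    have q2 := Nat.mod_lt n hh
    have q3 : n ≤ 2 * h * (n / h) := by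
      have : h ≤ h * (n / h) := Nat.le_mul_of_pos_right _ (Nat.div_pos (by omega) hh)
      rw [mul_assoc]; omega
    exact_mod_cast q3
  rw [le_div_iff₀ hsq]
  have e1 : Real.exp (- (2 * h * (L + h * K))) * (Real.exp (2 * h * L) * Real.exp (2 * h * (h * K))) = 1 := by
    rw [← Real.exp_add, ← Real.exp_add, ← Real.exp_zero]
    congr 1; ring
  have e2 : Real.exp (4 * h * L) * Real.exp (2 * h * L) ≤ Real.sqrt n := by
    rw [← hexp, ← Real.exp_add]
    refine Real.exp_le_exp.2 ?_
    linarith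
  have e3 : P * (n / h : ℕ) ≤ Real.sqrt n * Real.exp (2 * h * (h * K)) := by
    calc P * (n / h : ℕ) = P * ((n / h : ℕ) * Real.exp (- (2 * h * (L + h * K)))) *
          (Real.exp (2 * h * L) * Real.exp (2 * h * (h * K))) := by
          linear_combination (- P * (n / h : ℕ)) * e1
      _ ≤ Real.exp (4 * h * L) * (Real.exp (2 * h * L) * Real.exp (2 * h * (h * K))) :=
          mul_le_mul_of_nonneg_right hb (by positivity)
      _ = (Real.exp (4 * h * L) * Real.exp (2 * h * L)) * Real.exp (2 * h * (h * K)) := by ring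
      _ ≤ _ := mul_le_mul_of_nonneg_right e2 (by positivity)
  have e4 : P * n ≤ 2 * h * (Real.sqrt n * Real.exp (2 * h * (h * K))) := by
    calc P * n ≤ P * (2 * h * ((n / h : ℕ) : ℝ)) := mul_le_mul_of_nonneg_left hJ hP0
      _ = 2 * h * (P * (n / h : ℕ)) := by ring
      _ ≤ _ := mul_le_mul_of_nonneg_left e3 (by positivity)
  have e5 : (n:ℝ) = Real.sqrt n * Real.sqrt n := (Real.mul_self_sqrt (by linarith)).symm
  refine le_of_mul_le_mul_right ?_ hsq
  calc P * Real.sqrt n * Real.sqrt n = P * n := by rw [mul_assoc, ← e5]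
    _ ≤ _ := e4
    _ = _ := by ring

theorem adj_iff {n : ℕ} (ω : Sample n) (e : EdgeIdx n) : sampleAdj ω e.1.1 e.1.2 ↔ ω e = true := by
  constructor
  · rintro ⟨e', h, ⟨h1, h2⟩ | ⟨h1, h2⟩⟩
    · have : e' = e := Subtype.ext (Prod.ext (Fin.ext h1) (Fin.ext h2))
      rw [← this]; exact h
    · have l1 : e'.1.1.val < e'.1.2.val := e'.2
      have l2 : e.1.1.val < e.1.2.val := e.2
      omega
  · intro h
    exact ⟨e, h, Or.inl ⟨rfl, rfl⟩⟩

theorem adj_symm {n : ℕ} (ω : Sample n) (v w : Fin n) : sampleAdj ω v w ↔ sampleAdj ω w v := by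
  unfold sampleAdj adjVal
  refine exists_congr fun e => and_congr_right fun _ => or_comm

theorem adj_irrefl {n : ℕ} (ω : Sample n) (v : Fin n) : ¬ sampleAdj ω v v := by
  rintro ⟨e, _, h⟩
  have l1 : e.1.1.val < e.1.2.val := e.2
  omega

theorem prob_tendsto {p : ℕ → ℝ} (hp : ∀ i, 0 < p i ∧ p i < 1)
    (hlog : Tendsto
      (fun n : ℕ => Real.log (∏ i ∈ Finset.Icc 1 n, (1 - p i)) / Real.log n) atTop (nhds 0))
    (T : Type) [Finite T] [Nonempty T] (A : T → T → Prop) (hs : ∀ a b, A a b ↔ A b a)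
    (hi : ∀ a, ¬ A a a) (E : ∀ n, Sample n → Prop)
    (hE : ∀ n (ω : Sample n) (ι : T → Fin n), (∀ a v, sampleAdj ω v (ι a) → ∃ b, v = ι b) →
      (∀ a b, sampleAdj ω (ι a) (ι b) ↔ A a b) → E n ω) :
    Tendsto (fun n => Pr p n (E n)) atTop (nhds 1) := by
  classical
  obtain ⟨h, ⟨φ⟩⟩ := Finite.exists_equiv_fin T
  have hh : 0 < h := by
    obtain ⟨t⟩ := ‹Nonempty T›
    exact (φ t).pos
  let f : ∀ n, EdgeIdx n → Bool := fun n e =>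
    decide (e.1.1.val / h = e.1.2.val / h ∧ A (φ.symm ⟨e.1.1.val % h, Nat.mod_lt _ hh⟩)
      (φ.symm ⟨e.1.2.val % h, Nat.mod_lt _ hh⟩))
  obtain ⟨C, hC⟩ := none_bound hp hlog h hh
  have key : ∀ n (ω : Sample n), ¬ E n ω → ∀ i < n / h, ¬ ∀ e ∈ tb n h i, ω e = f n e := by
    intro n ω hne i hin hcyl
    refine hne ?_
    have hin' : (i + 1) * h ≤ n := by
      have := Nat.mul_le_mul_right h (Nat.succ_le_of_lt hin)
      exact this.trans (Nat.div_mul_le_self n h)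
    have hlt : ∀ a : T, i * h + (φ a).val < n := fun a => by
      have := (φ a).isLt
      rw [Nat.add_mul, Nat.one_mul] at hin'
      omega
    let ι : T → Fin n := fun a => ⟨i * h + (φ a).val, hlt a⟩
    have hdiv : ∀ a, (ι a).val / h = i := fun a => by
      simp only [ι]
      rw [Nat.mul_comm, Nat.mul_add_div hh, Nat.div_eq_of_lt (φ a).isLt, Nat.add_zero]
    have hmod : ∀ a, (⟨(ι a).val % h, Nat.mod_lt _ hh⟩ : Fin h) = φ a := fun a => by
      refine Fin.ext ?_
      simp only [ι]
      rw [Nat.mul_comm, Nat.mul_add_mod, Nat.mod_eq_of_lt (φ a).isLt]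
    have hι : ∀ v : Fin n, v.val / h = i → v = ι (φ.symm ⟨v.val % h, Nat.mod_lt _ hh⟩) := by
      intro v hv
      refine Fin.ext ?_
      simp only [ι, Equiv.apply_symm_apply]
      rw [← hv, Nat.mul_comm]
      exact (Nat.div_add_mod _ _).symm
    refine hE n ω ι ?_ ?_
    · rintro a v ⟨e, he, h1⟩
      have hmem : e ∈ tb n h i := by
        simp only [tb, Finset.mem_filter, Finset.mem_univ, true_and]
        rcases h1 with ⟨_, h1⟩ | ⟨h1, _⟩
        · right; rw [h1, hdiv]
        · left; rw [h1, hdiv]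
      rw [hcyl e hmem] at he
      simp only [f, decide_eq_true_eq] at he
      refine ⟨_, hι v ?_⟩
      rcases h1 with ⟨h1, h2⟩ | ⟨h1, h2⟩
      · rw [← h1, he.1, h2, hdiv]
      · rw [← h2, ← he.1, h1, hdiv]
    · have main : ∀ a b, ι a < ι b → (sampleAdj ω (ι a) (ι b) ↔ A a b) := by
        intro a b hab
        have q := adj_iff ω ⟨(ι a, ι b), hab⟩
        simp only at q
        rw [q, hcyl _ (by simp [tb, hdiv])]
        simp only [f, decide_eq_true_eq, hdiv, hmod, true_and, Equiv.symm_apply_apply]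
      intro a b
      rcases lt_trichotomy (ι a) (ι b) with hab | hab | hab
      · exact main a b hab
      · have : a = b := by
          have := congrArg (fun v : Fin n => (⟨v.val % h, Nat.mod_lt _ hh⟩ : Fin h)) hab
          simp only [hmod] at this
          exact φ.injective this
        subst this
        exact iff_of_false (adj_irrefl ω _) (hi a)
      · rw [adj_symm, hs, main b a hab]
  have hlow : ∀ᶠ n : ℕ in atTop, 1 - C / Real.sqrt n ≤ Pr p n (E n) := by
    filter_upwards [hC] with n hn
    have h1 := hn (f n) (fun e he => by
      simp only [f, decide_eq_true_eq] at he
      exact he.1)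
    have h2 := Pr_mono hp (key n)
    have h3 := Pr_not p (E n)
    linarith
  have hup : ∀ᶠ n : ℕ in atTop, Pr p n (E n) ≤ 1 := by
    filter_upwards with n
    have h3 := Pr_not p (E n)
    have := Pr_nonneg hp (fun ω => ¬ E n ω)
    linarith
  have hlim : Tendsto (fun n : ℕ => 1 - C / Real.sqrt n) atTop (nhds 1) := by
    have h1 : Tendsto (fun n : ℕ => Real.sqrt n) atTop atTop :=
      Real.tendsto_sqrt_atTop.comp tendsto_natCast_atTop_atTop
    have h2 := (tendsto_const_nhds (x := (1:ℝ))).sub (h1.const_div_atTop C)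
    simpa using h2
  exact tendsto_of_tendsto_of_tendsto_of_le_of_le' hlim tendsto_const_nhds hlow hup

end Lim

open Nat.Partrec (Code)

/-- Let `p̄` with `0 < p i < 1` satisfy
`log (∏_{i=1}^n (1 - p i)) / log n → 0` (so that a zero-one law holds for `L`).  Then there
is no computable procedure deciding, for a sentence `ψ` of `L` (given by its standard
encoding `sentenceCode ψ`), whether `Prob(n, p̄; ψ) → 1` or `Prob(n, p̄; ψ) → 0`. -/
theorem statement_17 (p : ℕ → ℝ) (hp : ∀ i, 0 < p i ∧ p i < 1)
    (hlog : Tendsto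
      (fun n : ℕ => Real.log (∏ i ∈ Finset.Icc 1 n, (1 - p i)) / Real.log n) atTop (nhds 0)) :
    ¬ ∃ d : ℕ → Bool, Computable d ∧
        ∀ ψ : Language.graph.Sentence,
          (d (sentenceCode ψ) = true ↔ Tendsto (fun n => ProbL p n ψ) atTop (nhds 1)) := by
  rintro ⟨d, hd, hspec⟩
  let F : ℕ →. ℕ := fun k => (Denumerable.ofNat Code k).eval 0
  have hF : Nat.Partrec F := Partrec.nat_iff.1
    (Nat.Partrec.Code.eval_part.comp (Computable.ofNat Code) (Computable.const 0))
  obtain ⟨c, hc⟩ := Nat.Partrec.Code.exists_code.1 hF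
  obtain ⟨ψ, ⟨pre, suf, henc⟩, hreal⟩ := exists_sent (c.encodeCode + 1) c
  have hsat : ∀ k n (ω : Sample n), SatL ω (ψ k) ↔
      ∃ w : Fin (8 + (c.encodeCode + 1) + 1) → Fin n,
        Phi (sampleAdj ω) (ext (8 + (c.encodeCode + 1)) w) (c.encodeCode + 1) c ∧
          Ch (sampleAdj ω) (ext (8 + (c.encodeCode + 1)) w) k
            (ext (8 + (c.encodeCode + 1)) w (8 + (c.encodeCode + 1))) := by
    intro k n ω
    exact hreal k (Fin n) (graphStructure ω)
  have hiff : ∀ k, (c.eval k).Dom ↔ d (sentenceCode (ψ k)) = true := by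
    intro k
    rw [hspec]
    constructor
    · intro hdom
      obtain ⟨y, hy⟩ := Part.dom_iff_mem.1 hdom
      obtain ⟨N0, hN0⟩ := exists_BEv c k y hy
      let N := N0 + k + y
      have hev : BEv N c k y := hN0.mono (by omega)
      haveI : Nonempty (HT (c.encodeCode + 1) N) := ⟨.num 0⟩
      refine prob_tendsto hp hlog (HT (c.encodeCode + 1) N) (HAdj _ N) (HAdj_symm _ N)
        (HAdj_irrefl _ N) (fun n ω => SatL ω (ψ k)) ?_
      intro n ω ι h1 h2
      rw [hsat]
      exact realize_H (sampleAdj ω) _ N ι h1 h2 c (Nat.lt_succ_self _) k y (by omega) (by omega) hev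
    · intro hlim
      by_contra hnd
      have hz : ∀ n, ProbL p n (ψ k) = 0 := by
        intro n
        unfold ProbL Pr
        refine Finset.sum_eq_zero fun ω _ => if_neg ?_
        intro hs
        obtain ⟨w, q1, q2⟩ := (hsat k n ω).1 hs
        exact hnd (sound_sent _ _ _ c (Nat.lt_succ_self _) k q1 q2)
      simp only [hz] at hlim
      exact zero_ne_one (tendsto_nhds_unique tendsto_const_nhds hlim)
  refine ComputablePred.halting_problem 0 ?_
  rw [ComputablePred.computable_iff]
  have hprim : Primrec fun k => sentenceCode (ψ k) := by
    refine (primrec_code (8 + (c.encodeCode + 1)) pre suf).of_eq fun k => ?_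
    rw [sentenceCode, henc]
  refine ⟨fun a => d (sentenceCode (ψ (Encodable.encode a))),
    hd.comp (hprim.to_comp.comp Computable.encode), ?_⟩
  funext a
  refine propext ?_
  rw [← hiff, hc]
  simp only [F, Denumerable.ofNat_encode]

end RandomGraph
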